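/- arXiv:2504.18302 — 7 statements merged into one kernel-verified Lean document; each statement's English description precedes it below -/
import Mathlib

section
/- Let F=(V,E) be a forest and let D ⊆ V. Then at least one of the following holds: (i) D = ∅; (ii) there is a vertex v ∈ D whose degree in F is at most 1; (iii) there is a connected component C of F − D such that exactly one vertex of D is adjacent in F to a vertex of C, i.e. |N_F(V(C)) ∩ D| = 1. -/
/-! Preliminary definitions: rooted tree decompositions, `S`-traces, `S`-nice and
slim tree decompositions, following Chapelle et al. -/

/-- A walk in `G` all of whose vertices lie in the set `W`. -/
def SimpleGraph.ReachableIn {V : Type} (G : SimpleGraph V) (W : Set V) (u v : V) : Prop :=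
  ∃ p : G.Walk u v, ∀ x ∈ p.support, x ∈ W

/-- The open neighborhood of a set of vertices. -/
def SimpleGraph.nbhdSet {V : Type} (G : SimpleGraph V) (W : Set V) : Set V :=
  {x | x ∉ W ∧ ∃ w ∈ W, G.Adj w x}

/-- The vertex set of the connected component of `G − X` that contains `v`
(assuming `v ∉ X`). -/
def SimpleGraph.compOutside {V : Type} (G : SimpleGraph V) (X : Set V) (v : V) : Set V :=
  {w | G.ReachableIn Xᶜ v w}

/-- A rooted tree decomposition of a graph `G` on vertex type `V`, with node type `ι`.
The rooted tree is given by a parent function: the root is a fixed point of `parent`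
and every node reaches the root by iterating `parent`.  The bags satisfy the three
usual conditions of a tree decomposition; connectedness of `{t | v ∈ bag t}` is
expressed by the existence of a highest node `m` containing `v` such that from any
node whose bag contains `v` the whole ancestor chain up to `m` contains `v`. -/
structure RootedTreeDecomp (V ι : Type) (G : SimpleGraph V) where
  root : ι
  parent : ι → ι
  parent_root : parent root = root
  reaches_root : ∀ t : ι, ∃ n : ℕ, parent^[n] t = root
  bag : ι → Set V
  bags_cover : ∀ v : V, ∃ t : ι, v ∈ bag t
  bags_of_edges : ∀ ⦃u v : V⦄, G.Adj u v → ∃ t : ι, u ∈ bag t ∧ v ∈ bag t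
  bags_connected : ∀ v : V, ∃ m : ι, v ∈ bag m ∧
    ∀ t : ι, v ∈ bag t → ∃ n : ℕ, parent^[n] t = m ∧ ∀ i ≤ n, v ∈ bag (parent^[i] t)

namespace RootedTreeDecomp

variable {V ι : Type} {G : SimpleGraph V}

/-- `t'` lies in the subtree `T_t` rooted at `t`; equivalently, `t` is an
ancestor (possibly equal) of `t'`. -/
def InSubtree (𝒯 : RootedTreeDecomp V ι G) (t t' : ι) : Prop :=
  ∃ n : ℕ, 𝒯.parent^[n] t' = t

/-- `t` is the parent of `t'`. -/
def IsParent (𝒯 : RootedTreeDecomp V ι G) (t t' : ι) : Prop :=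
  t' ≠ 𝒯.root ∧ 𝒯.parent t' = t

/-- `V_t`: the union of the bags of the nodes of the subtree rooted at `t`. -/
def Vt (𝒯 : RootedTreeDecomp V ι G) (t : ι) : Set V :=
  {v | ∃ t', 𝒯.InSubtree t t' ∧ v ∈ 𝒯.bag t'}

/-- `L_t = V_t ∖ X_t`. -/
def Lt (𝒯 : RootedTreeDecomp V ι G) (t : ι) : Set V := 𝒯.Vt t \ 𝒯.bag t

/-- `R_t = V ∖ V_t`. -/
def Rt (𝒯 : RootedTreeDecomp V ι G) (t : ι) : Set V := (𝒯.Vt t)ᶜ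

/-- `L_t^S = L_t ∩ S`. -/
def LS (𝒯 : RootedTreeDecomp V ι G) (S : Set V) (t : ι) : Set V := 𝒯.Lt t ∩ S

/-- `X_t^S = X_t ∩ S`. -/
def XS (𝒯 : RootedTreeDecomp V ι G) (S : Set V) (t : ι) : Set V := 𝒯.bag t ∩ S

/-- `R_t^S = R_t ∩ S`. -/
def RS (𝒯 : RootedTreeDecomp V ι G) (S : Set V) (t : ι) : Set V := 𝒯.Rt t ∩ S

/-- The `S`-trace of a node `t`. -/
def STrace (𝒯 : RootedTreeDecomp V ι G) (S : Set V) (t : ι) : Set V × Set V × Set V :=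
  (𝒯.LS S t, 𝒯.XS S t, 𝒯.RS S t)

/-- Every bag has size at most `k + 1`, i.e. the width is at most `k`. -/
def WidthAtMost (𝒯 : RootedTreeDecomp V ι G) (k : ℕ) : Prop :=
  ∀ t : ι, (𝒯.bag t).ncard ≤ k + 1

/-- The width of the decomposition (max bag size minus one) is exactly `k`. -/
def HasWidth (𝒯 : RootedTreeDecomp V ι G) (k : ℕ) : Prop :=
  𝒯.WidthAtMost k ∧ ∃ t : ι, (𝒯.bag t).ncard = k + 1

/-- `t'` is an `S`-child of `t`. -/
def IsSChild (𝒯 : RootedTreeDecomp V ι G) (S : Set V) (t t' : ι) : Prop :=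
  𝒯.IsParent t t' ∧ ((𝒯.LS S t' ∪ 𝒯.XS S t') \ (𝒯.RS S t ∪ 𝒯.XS S t)).Nonempty

/-- `t` is an `S`-bottom node: `L_t^S ≠ ∅` and `t` is the bottom node of the
directed path of its own `S`-trace (every node with the same `S`-trace is an
ancestor of `t`). -/
def IsSBottom (𝒯 : RootedTreeDecomp V ι G) (S : Set V) (t : ι) : Prop :=
  (𝒯.LS S t).Nonempty ∧ ∀ t', 𝒯.STrace S t' = 𝒯.STrace S t → 𝒯.InSubtree t' t

/-- `t` admits the `S`-operation `introduce(v)`. -/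
def AdmitsIntroduce (𝒯 : RootedTreeDecomp V ι G) (S : Set V) (t : ι) (v : V) : Prop :=
  ∃ t₁, 𝒯.IsSChild S t t₁ ∧ (∀ t₂, 𝒯.IsSChild S t t₂ → t₂ = t₁) ∧
    v ∈ S ∧ v ∉ 𝒯.bag t₁ ∧ 𝒯.XS S t = 𝒯.XS S t₁ ∪ {v}

/-- `t` admits the `S`-operation `forget(v)`. -/
def AdmitsForget (𝒯 : RootedTreeDecomp V ι G) (S : Set V) (t : ι) (v : V) : Prop :=
  ∃ t₁, 𝒯.IsSChild S t t₁ ∧ (∀ t₂, 𝒯.IsSChild S t t₂ → t₂ = t₁) ∧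
    v ∈ S ∧ v ∈ 𝒯.bag t₁ ∧ 𝒯.XS S t = 𝒯.XS S t₁ \ {v}

/-- `t` admits the `S`-operation `join` with the two `S`-children `t₁, t₂`. -/
def AdmitsJoin (𝒯 : RootedTreeDecomp V ι G) (S : Set V) (t t₁ t₂ : ι) : Prop :=
  t₁ ≠ t₂ ∧ 𝒯.IsSChild S t t₁ ∧ 𝒯.IsSChild S t t₂ ∧
    (∀ t₃, 𝒯.IsSChild S t t₃ → t₃ = t₁ ∨ t₃ = t₂) ∧
    𝒯.XS S t₁ ∪ 𝒯.XS S t₂ ⊆ 𝒯.XS S t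

/-- `S`-nice tree decomposition: bags along tree edges are comparable and differ in
size by at most one, and every `S`-bottom node admits one of the `S`-operations. -/
def IsSNice (𝒯 : RootedTreeDecomp V ι G) (S : Set V) : Prop :=
  (∀ t t' : ι, 𝒯.IsParent t' t →
      (𝒯.bag t ⊆ 𝒯.bag t' ∨ 𝒯.bag t' ⊆ 𝒯.bag t) ∧
      (𝒯.bag t).ncard ≤ (𝒯.bag t').ncard + 1 ∧ (𝒯.bag t').ncard ≤ (𝒯.bag t).ncard + 1) ∧
  ∀ t : ι, 𝒯.IsSBottom S t →
    (∃ v, 𝒯.AdmitsIntroduce S t v) ∨ (∃ v, 𝒯.AdmitsForget S t v) ∨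
      (∃ t₁ t₂, 𝒯.AdmitsJoin S t t₁ t₂)

/-- Nice tree decomposition: root and leaves have empty bags, and every internal
node is an introduce, forget, or join node. -/
def IsNice (𝒯 : RootedTreeDecomp V ι G) : Prop :=
  𝒯.bag 𝒯.root = ∅ ∧
  (∀ t : ι, (∀ t', ¬𝒯.IsParent t t') → 𝒯.bag t = ∅) ∧
  ∀ t : ι, (∃ t', 𝒯.IsParent t t') →
    (∃ t', 𝒯.IsParent t t' ∧ (∀ t'', 𝒯.IsParent t t'' → t'' = t') ∧
      ((∃ v, v ∉ 𝒯.bag t' ∧ 𝒯.bag t = 𝒯.bag t' ∪ {v}) ∨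
        (∃ v, v ∈ 𝒯.bag t' ∧ 𝒯.bag t = 𝒯.bag t' \ {v}))) ∨
    (∃ t₁ t₂, t₁ ≠ t₂ ∧ 𝒯.IsParent t t₁ ∧ 𝒯.IsParent t t₂ ∧
      (∀ t₃, 𝒯.IsParent t t₃ → t₃ = t₁ ∨ t₃ = t₂) ∧
      𝒯.bag t = 𝒯.bag t₁ ∧ 𝒯.bag t = 𝒯.bag t₂)

/-- A set of nodes inducing a connected subtree of the tree: it contains a node `m`
such that from every node of the set the whole ancestor chain up to `m` stays in
the set. -/
def ConnectedNodeSet (𝒯 : RootedTreeDecomp V ι G) (A : Set ι) : Prop :=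
  ∃ m ∈ A, ∀ t ∈ A, ∃ n : ℕ, 𝒯.parent^[n] t = m ∧ ∀ i ≤ n, 𝒯.parent^[i] t ∈ A

/-- A full join tree: a non-trivial inclusion-maximal connected set of nodes all of
which share one and the same full bag `X` (of size `k + 1`). -/
def IsFullJoinTree (𝒯 : RootedTreeDecomp V ι G) (k : ℕ) (A : Set ι) (X : Set V) : Prop :=
  A.Nontrivial ∧ 𝒯.ConnectedNodeSet A ∧ X.ncard = k + 1 ∧ (∀ t ∈ A, 𝒯.bag t = X) ∧
  ∀ A' : Set ι, A ⊆ A' → 𝒯.ConnectedNodeSet A' → (∀ t ∈ A', 𝒯.bag t = X) → A' = A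

/-- `m` is the root (top node) of the node set `A`. -/
def IsTopOf (𝒯 : RootedTreeDecomp V ι G) (A : Set ι) (m : ι) : Prop :=
  m ∈ A ∧ ∀ t ∈ A, 𝒯.InSubtree m t

/-- The condition on a pair `(u, ti)` appearing in condition (7) of slimness:
either `ti` belongs to `T'_C` (it is an `S`-child of a node of the full join tree
`A` but is not itself in `A`) and `u ∈ V_{ti}`, or `ti` is the parent of the root
`tr` of the full join tree and `u ∈ V ∖ V_{tr}`. -/
def FullJoinBranch (𝒯 : RootedTreeDecomp V ι G) (S : Set V) (A : Set ι) (tr : ι)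
    (u : V) (ti : ι) : Prop :=
  (ti ∉ A ∧ (∃ ta ∈ A, 𝒯.IsSChild S ta ti) ∧ u ∈ 𝒯.Vt ti) ∨
  (tr ≠ 𝒯.root ∧ ti = 𝒯.parent tr ∧ u ∉ 𝒯.Vt tr)

/-- Slim `S`-nice tree decomposition of width `k` (the seven conditions of the
paper; a bag is *full* if it has size `k + 1`). -/
def IsSlim (𝒯 : RootedTreeDecomp V ι G) (S : Set V) (k : ℕ) : Prop :=
  -- (1) the root is not an S-bottom node
  (¬𝒯.IsSBottom S 𝒯.root) ∧
  -- (2) S-bottom nodes with two S-children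
  (∀ t t₁ t₂ : ι, 𝒯.IsSBottom S t → t₁ ≠ t₂ → 𝒯.IsSChild S t t₁ → 𝒯.IsSChild S t t₂ →
    (∃ A X, 𝒯.IsFullJoinTree k A X ∧ t ∈ A) ∨
      ((𝒯.bag t₁).ncard ≠ k + 1 ∧ (𝒯.bag t₂).ncard ≠ k + 1 ∧
        (𝒯.bag t₁).ncard ≤ (𝒯.bag t).ncard ∧ (𝒯.bag t₂).ncard ≤ (𝒯.bag t).ncard ∧
        ∀ tp, 𝒯.IsParent tp t →
          (𝒯.bag tp).ncard ≠ k + 1 ∧ (𝒯.bag tp).ncard ≤ (𝒯.bag t).ncard)) ∧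
  -- (3) S-bottom nodes with a non-full bag
  (∀ t tp : ι, 𝒯.IsSBottom S t → (𝒯.bag t).ncard ≠ k + 1 → 𝒯.IsParent tp t →
    𝒯.bag t = 𝒯.bag tp ∧ ∀ t'', 𝒯.IsSChild S tp t'' → t'' = t) ∧
  -- (4) S-bottom nodes admitting forget(v)
  (∀ t v t', 𝒯.IsSBottom S t → 𝒯.AdmitsForget S t v → 𝒯.IsSChild S t t' →
    (𝒯.bag t').ncard ≠ k + 1 →
    (∀ t₁ t₂, 𝒯.IsSChild S t' t₁ → 𝒯.IsSChild S t' t₂ → t₁ = t₂) ∧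
      ∀ t'', 𝒯.IsSChild S t' t'' → 𝒯.bag t' = 𝒯.bag t'') ∧
  -- (5) parents of S-bottom nodes with non-full bags
  (∀ t tp, 𝒯.IsSBottom S t → 𝒯.IsParent tp t → (𝒯.bag tp).ncard ≠ k + 1 →
    tp = 𝒯.root ∨ ∀ tpp, 𝒯.IsParent tpp tp → ¬𝒯.IsSBottom S tpp) ∧
  -- (6) nodes of full join trees
  (∀ A X, 𝒯.IsFullJoinTree k A X → ∀ t ∈ A,
    𝒯.IsSBottom S t ∧ ∃ t₁ t₂, t₁ ≠ t₂ ∧ 𝒯.IsSChild S t t₁ ∧ 𝒯.IsSChild S t t₂) ∧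
  -- (7) branching condition of full join trees
  (∀ A X tr, 𝒯.IsFullJoinTree k A X → 𝒯.IsTopOf A tr →
    ∀ v ∈ X \ S, ∃ u₁ u₂ u₃ : V, ∃ t₁ t₂ t₃ : ι,
      u₁ ≠ u₂ ∧ u₁ ≠ u₃ ∧ u₂ ≠ u₃ ∧ t₁ ≠ t₂ ∧ t₁ ≠ t₃ ∧ t₂ ≠ t₃ ∧
      (G.Adj v u₁ ∧ u₁ ∉ X ∧ (∃ s ∈ S, G.ReachableIn Xᶜ u₁ s) ∧
        𝒯.FullJoinBranch S A tr u₁ t₁) ∧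
      (G.Adj v u₂ ∧ u₂ ∉ X ∧ (∃ s ∈ S, G.ReachableIn Xᶜ u₂ s) ∧
        𝒯.FullJoinBranch S A tr u₂ t₂) ∧
      (G.Adj v u₃ ∧ u₃ ∉ X ∧ (∃ s ∈ S, G.ReachableIn Xᶜ u₃ s) ∧
        𝒯.FullJoinBranch S A tr u₃ t₃))

end RootedTreeDecomp

/-- `tw(G) ≤ k`: `G` admits a (rooted) tree decomposition of width at most `k`. -/
def SimpleGraph.TreewidthAtMost {V : Type} (G : SimpleGraph V) (k : ℕ) : Prop :=
  ∃ (ι : Type) (𝒯 : RootedTreeDecomp V ι G), 𝒯.WidthAtMost k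

theorem forest_append_isPath {V : Type} {F : SimpleGraph V} (hF : F.IsAcyclic) {u v w d : V}
    (p : F.Walk u v) (hp : p.IsPath) (h : F.Adj v w) (hw : w ∉ p.support)
    (q : F.Walk w d) (hq : (q.cons h).IsPath) : (p.append (q.cons h)).IsPath := by
  rw [hF.isPath_iff_isChain, SimpleGraph.Walk.edges_append, List.isChain_append]
  refine ⟨(hF.isPath_iff_isChain _).1 hp, (hF.isPath_iff_isChain _).1 hq, ?_⟩
  intro x hx y hy hxy
  have hx' : x ∈ p.edges := List.mem_of_mem_getLast? hx
  simp only [SimpleGraph.Walk.edges_cons, List.head?_cons, Option.mem_def,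
    Option.some.injEq] at hy
  subst hy
  subst hxy
  exact hw (p.snd_mem_support_of_mem_edges hx')

theorem forest_extend {V : Type} [Fintype V] (F : SimpleGraph V)
    (hF : F.IsAcyclic) (D : Set V) (h1 : ∀ v ∈ D, ¬ (F.neighborSet v).ncard ≤ 1)
    (h2 : ∀ v, v ∉ D → (F.nbhdSet (F.compOutside D v) ∩ D).ncard ≠ 1)
    {u v : V} (hv : v ∈ D) (p : F.Walk u v) (hp : p.IsPath) :
    ∃ d ∈ D, ∃ q : F.Walk u d, q.IsPath ∧ p.length < q.length := by
  classical
  obtain ⟨w, hw, hwp⟩ : ∃ w, F.Adj v w ∧ w ∉ p.support := by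
    by_contra! hc
    apply h1 v hv
    rw [Set.ncard_le_one]
    intro a ha b hb
    rw [hF.eq_penultimate_of_adj_end hp ha (hc a ha),
      hF.eq_penultimate_of_adj_end hp hb (hc b hb)]
  suffices H : ∃ d ∈ D, ∃ q : F.Walk w d, (q.cons hw).IsPath by
    obtain ⟨d, hd, q, hq⟩ := H
    exact ⟨d, hd, _, forest_append_isPath hF p hp hw hwp q hq, by simp⟩
  by_cases hwD : w ∈ D
  · exact ⟨w, hwD, .nil, by simp [hw.ne]⟩
  have hvN : v ∈ F.nbhdSet (F.compOutside D w) ∩ D := by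
    refine ⟨⟨fun ⟨r, hr⟩ => hr v r.end_mem_support hv, w, ⟨.nil, ?_⟩, hw.symm⟩, hv⟩
    simpa using hwD
  obtain ⟨d, ⟨⟨-, c, ⟨r, hr⟩, hcd⟩, hd⟩, hdv⟩ :
      ∃ d ∈ F.nbhdSet (F.compOutside D w) ∩ D, d ≠ v := by
    by_contra! hc
    exact h2 w hwD (Set.ncard_eq_one.2 ⟨v, Set.eq_singleton_iff_unique_mem.2 ⟨hvN, hc⟩⟩)
  have hr' : ∀ x ∈ r.bypass.support, x ∉ D := fun x hx => hr x (r.support_bypass_subset_support hx)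
  refine ⟨d, hd, r.bypass.concat hcd, ?_⟩
  rw [SimpleGraph.Walk.cons_isPath_iff]
  refine ⟨r.bypass_isPath.concat (fun h => hr' d h hd) hcd, ?_⟩
  rw [SimpleGraph.Walk.support_concat]
  intro h
  have h' : v ∈ r.bypass.support ∨ v = d := by simpa using h
  rcases h' with h | h
  · exact hr' v h hv
  · exact hdv h.symm

/-- For a forest `F` and `D ⊆ V`: either `D = ∅`, or some
`v ∈ D` has degree at most one in `F`, or some connected component `C` of `F − D`
satisfies `|N_F(V(C)) ∩ D| = 1`. -/
theorem statement11 {V : Type} [Fintype V] [DecidableEq V] (F : SimpleGraph V)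
    (hF : F.IsAcyclic) (D : Set V) :
    D = ∅ ∨ (∃ v ∈ D, (F.neighborSet v).ncard ≤ 1) ∨
      (∃ v, v ∉ D ∧ (F.nbhdSet (F.compOutside D v) ∩ D).ncard = 1) := by
  by_contra! hc
  obtain ⟨h0, h1, h2⟩ := hc
  obtain ⟨u, hu⟩ := h0
  have key : ∀ n : ℕ, ∃ d ∈ D, ∃ q : F.Walk u d, q.IsPath ∧ n ≤ q.length := by
    intro n
    induction n with
    | zero => exact ⟨u, hu, .nil, by simp, by simp⟩
    | succ n ih =>
      obtain ⟨d, hd, q, hq, hn⟩ := ih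
      obtain ⟨d', hd', q', hq', hn'⟩ := forest_extend F hF D
        (fun v hv => not_le.2 (h1 v hv)) h2 hd q hq
      exact ⟨d', hd', q', hq', by omega⟩
  obtain ⟨d, -, q, hq, hn⟩ := key (Fintype.card V)
  exact absurd hq.length_lt (not_lt.2 hn)
end

section
/- Let G=(V,E) be a graph and let X ⊆ V be nonempty such that G[X] is a complete graph, C := G − X is a tree, and N_G(V(C)) = X. If there exists a vertex v ∈ V(C) such that for every connected component C' of C − v there is a vertex u_{C'} ∈ X with N_G(V(C')) ⊆ (X ∪ {v}) ∖ {u_{C'}}, then tw(G) = |X|; otherwise tw(G) = |X| + 1. -/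
namespace TWAux

section reach
variable {V : Type} {G : SimpleGraph V} {W W' : Set V} {a b c : V}

lemma rrefl (h : a ∈ W) : G.ReachableIn W a a := ⟨.nil, by simpa using h⟩

lemma rtrans (h : G.ReachableIn W a b) (h' : G.ReachableIn W b c) : G.ReachableIn W a c := by
  obtain ⟨p, hp⟩ := h
  obtain ⟨q, hq⟩ := h'
  refine ⟨p.append q, fun x hx => ?_⟩
  rcases (SimpleGraph.Walk.mem_support_append_iff _ _).1 hx with h | h
  · exact hp x h
  · exact hq x h

lemma rsymm (h : G.ReachableIn W a b) : G.ReachableIn W b a := by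
  obtain ⟨p, hp⟩ := h
  exact ⟨p.reverse, fun x hx => hp x (by simpa using hx)⟩

lemma radj (h : G.Adj a b) (ha : a ∈ W) (hb : b ∈ W) : G.ReachableIn W a b :=
  ⟨.cons h .nil, by simp [ha, hb]⟩

lemma rmono (hW : W ⊆ W') (h : G.ReachableIn W a b) : G.ReachableIn W' a b := by
  obtain ⟨p, hp⟩ := h
  exact ⟨p, fun x hx => hW (hp x hx)⟩

lemma rleft (h : G.ReachableIn W a b) : a ∈ W := by
  obtain ⟨p, hp⟩ := h
  exact hp _ p.start_mem_support

lemma rright (h : G.ReachableIn W a b) : b ∈ W := rleft (rsymm h)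

lemma rind {P : V → Prop} (h : G.ReachableIn W a b) (h0 : P a)
    (hs : ∀ x y, G.Adj x y → x ∈ W → y ∈ W → P x → P y) : P b := by
  obtain ⟨p, hp⟩ := h
  induction p with
  | nil => exact h0
  | cons hadj q ih =>
    refine ih (hs _ _ hadj (hp _ (by simp)) (hp _ (by simp)) h0) (fun x hx => hp x (by simp [hx]))

/-- components are internally connected -/
lemma rself (h : G.ReachableIn W a b) : G.ReachableIn {w | G.ReachableIn W a w} a b := by
  have : G.ReachableIn W a b ∧ G.ReachableIn {w | G.ReachableIn W a w} a b := by
    refine rind (P := fun b => G.ReachableIn W a b ∧ G.ReachableIn {w | G.ReachableIn W a w} a b)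
      h ?_ ?_
    · have := rrefl (G := G) (rleft h)
      exact ⟨this, rrefl this⟩
    · rintro x y hxy hx hy ⟨h1, h2⟩
      have h3 := rtrans h1 (radj hxy hx hy)
      exact ⟨h3, rtrans h2 (radj hxy h1 h3)⟩
  exact this.2

lemma compConn {X : Set V} {a b w : V} (ha : a ∈ G.compOutside X w) (hb : b ∈ G.compOutside X w) :
    G.ReachableIn (G.compOutside X w) a b :=
  rtrans (rsymm (rself ha)) (rself hb)

lemma rinduce {X : Set V} (h : (G.induce X).Connected) (ha : a ∈ X) (hb : b ∈ X) :
    G.ReachableIn X a b := by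
  obtain ⟨p⟩ := h.preconnected ⟨a, ha⟩ ⟨b, hb⟩
  have key : ∀ {x y : ↥X} (q : (G.induce X).Walk x y), G.ReachableIn X x.1 y.1 := by
    intro x y q
    induction q with
    | nil => exact rrefl (Subtype.property _)
    | cons hadj q ih => exact rtrans (radj hadj (Subtype.property _) (Subtype.property _)) ih
  exact key p

end reach

section helly
variable {V ι : Type} {G : SimpleGraph V} (T : RootedTreeDecomp V ι G)

lemma exists_depth : ∃ d : ι → ℕ, (∀ t n, d (T.parent^[n] t) = d t - n) ∧
    ∀ t, d t = 0 → t = T.root := by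
  classical
  have key : ∀ t, Nat.find (T.reaches_root (T.parent t)) = Nat.find (T.reaches_root t) - 1 := by
    intro t
    have h1 := Nat.find_spec (T.reaches_root t)
    have h2 := Nat.find_spec (T.reaches_root (T.parent t))
    apply le_antisymm
    · apply Nat.find_min'
      rcases hn : Nat.find (T.reaches_root t) with _ | n
      · rw [hn] at h1
        simp only [Function.iterate_zero, id] at h1
        simp [h1, T.parent_root]
      · rw [hn] at h1
        simpa using h1
    · have := Nat.find_min' (T.reaches_root t) (m := Nat.find (T.reaches_root (T.parent t)) + 1)
        (by simpa using h2)
      omega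
  refine ⟨fun t => Nat.find (T.reaches_root t), ?_, ?_⟩
  · intro t n
    induction n with
    | zero => simp
    | succ n ih =>
      simp only [Function.iterate_succ', Function.comp] at ih ⊢
      rw [key, ih]
      omega
  · intro t ht
    have h1 := Nat.find_spec (T.reaches_root t)
    rw [show Nat.find (T.reaches_root t) = 0 from ht] at h1
    simpa using h1

/-- up-reachability inside a set of nodes -/
def Up (A : Set ι) (a c : ι) : Prop :=
  ∃ n : ℕ, T.parent^[n] a = c ∧ ∀ i ≤ n, T.parent^[i] a ∈ A

variable {T}

lemma Up.trans {A : Set ι} {a b c : ι} (h : Up T A a b) (h' : Up T A b c) : Up T A a c := by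
  obtain ⟨n, rfl, hn⟩ := h
  obtain ⟨k, rfl, hk⟩ := h'
  refine ⟨k + n, by rw [Function.iterate_add_apply], fun i hi => ?_⟩
  by_cases hin : i ≤ n
  · exact hn i hin
  · have := hk (i - n) (by omega)
    rwa [← Function.iterate_add_apply, Nat.sub_add_cancel (by omega)] at this

lemma Up.cmp {A A' : Set ι} {a b c : ι} (h : Up T A a b) (h' : Up T A' a c) :
    Up T A' b c ∨ Up T A c b := by
  obtain ⟨n, rfl, hn⟩ := h
  obtain ⟨k, rfl, hk⟩ := h'
  rcases le_total n k with hnk | hnk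
  · left
    refine ⟨k - n, by rw [← Function.iterate_add_apply, Nat.sub_add_cancel hnk], fun i hi => ?_⟩
    rw [← Function.iterate_add_apply]
    exact hk _ (by omega)
  · right
    refine ⟨n - k, by rw [← Function.iterate_add_apply, Nat.sub_add_cancel hnk], fun i hi => ?_⟩
    rw [← Function.iterate_add_apply]
    exact hn _ (by omega)

lemma Up.mono {A A' : Set ι} {a b : ι} (hA : A ⊆ A') (h : Up T A a b) : Up T A' a b := by
  obtain ⟨n, rfl, hn⟩ := h
  exact ⟨n, rfl, fun i hi => hA (hn i hi)⟩

lemma Up.right {A : Set ι} {a b : ι} (h : Up T A a b) : b ∈ A := by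
  obtain ⟨n, rfl, hn⟩ := h
  exact hn n le_rfl

lemma Up.left {A : Set ι} {a b : ι} (h : Up T A a b) : a ∈ A := by
  obtain ⟨n, rfl, hn⟩ := h
  exact hn 0 (Nat.zero_le _)

lemma Up.eq {A : Set ι} {a b : ι} (h : Up T A a b) {d : ι → ℕ}
    (hd : ∀ t n, d (T.parent^[n] t) = d t - n) (hd0 : ∀ t, d t = 0 → t = T.root)
    (hab : d a ≤ d b) : a = b := by
  obtain ⟨n, rfl, hn⟩ := h
  rw [hd] at hab
  rcases Nat.eq_zero_or_pos n with rfl | hpos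
  · rfl
  · rw [hd0 (T.parent^[n] a) (by rw [hd]; omega), hd0 a (by omega)]

lemma connNodes [Finite V] (T : RootedTreeDecomp V ι G) {B : Set V} (hB : B.Nonempty)
    (hc : ∀ a ∈ B, ∀ b ∈ B, G.ReachableIn B a b) :
    ∃ m, ∀ t, (T.bag t ∩ B).Nonempty → Up T {t | (T.bag t ∩ B).Nonempty} t m := by
  obtain ⟨d, hd, hd0⟩ := exists_depth T
  choose m hm hup using T.bags_connected
  obtain ⟨b0, hb0, hmin⟩ := Set.exists_min_image B (fun b => d (m b)) B.toFinite hB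
  set A := {t | (T.bag t ∩ B).Nonempty} with hA
  have hup' : ∀ b ∈ B, ∀ t, b ∈ T.bag t → Up T A t (m b) := by
    intro b hb t ht
    obtain ⟨n, h1, h2⟩ := hup b t ht
    exact ⟨n, h1, fun i hi => ⟨b, h2 i hi, hb⟩⟩
  have main : ∀ b ∈ B, Up T A (m b) (m b0) := by
    intro b hb
    refine rind (P := fun b => Up T A (m b) (m b0)) (hc b0 hb0 b hb) (hup' b0 hb0 _ (hm b0)) ?_
    intro x y hxy hx hy hP
    obtain ⟨t, htx, hty⟩ := T.bags_of_edges hxy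
    rcases (hup' x hx t htx).cmp (hup' y hy t hty) with h | h
    · rcases h.cmp hP with h' | h'
      · exact h'
      · have := h'.eq hd hd0 (hmin y hy)
        rw [← this]
        exact hup' b0 hb0 _ (hm b0)
    · exact h.trans hP
  refine ⟨m b0, ?_⟩
  rintro t ⟨b, hbt, hb⟩
  exact (hup' b hb t hbt).trans (main b hb)

lemma bramble [Finite V] (T : RootedTreeDecomp V ι G) {κ : Type} [Finite κ] [Nonempty κ]
    (B : κ → Set V) (hB : ∀ k, (B k).Nonempty)
    (hc : ∀ k, ∀ a ∈ B k, ∀ b ∈ B k, G.ReachableIn (B k) a b)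
    (ht : ∀ i j, ∃ a ∈ B i, ∃ b ∈ B j, a = b ∨ G.Adj a b) :
    ∃ t, ∀ k, (T.bag t ∩ B k).Nonempty := by
  obtain ⟨d, hd, hd0⟩ := exists_depth T
  choose m hm using fun k => connNodes T (hB k) (hc k)
  obtain ⟨k0, -, hmax⟩ := Set.exists_max_image Set.univ (fun k => d (m k)) Set.finite_univ
    Set.univ_nonempty
  refine ⟨m k0, fun k => ?_⟩
  have : ∃ t, (T.bag t ∩ B k0).Nonempty ∧ (T.bag t ∩ B k).Nonempty := by
    obtain ⟨a, ha, b, hb, h⟩ := ht k0 k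
    rcases h with rfl | h
    · obtain ⟨t, ht⟩ := T.bags_cover a
      exact ⟨t, ⟨a, ht, ha⟩, ⟨a, ht, hb⟩⟩
    · obtain ⟨t, h1, h2⟩ := T.bags_of_edges h
      exact ⟨t, ⟨a, h1, ha⟩, ⟨b, h2, hb⟩⟩
  obtain ⟨t, h1, h2⟩ := this
  rcases (hm k0 t h1).cmp (hm k t h2) with h | h
  · exact h.left
  · have := h.eq hd hd0 (hmax k (Set.mem_univ _))
    rw [← this]
    exact (hm k t h2).right

lemma cliqueBag [Finite V] (T : RootedTreeDecomp V ι G) (X C₁ C₂ : Set V)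
    (hX : ∀ u ∈ X, ∀ v ∈ X, u ≠ v → G.Adj u v)
    (h1 : ∀ a ∈ C₁, ∀ b ∈ C₁, G.ReachableIn C₁ a b)
    (h2 : ∀ a ∈ C₂, ∀ b ∈ C₂, G.ReachableIn C₂ a b)
    (h1n : C₁.Nonempty) (h2n : C₂.Nonempty)
    (h12 : ∃ a ∈ C₁, ∃ b ∈ C₂, a = b ∨ G.Adj a b)
    (h1X : ∀ x ∈ X, ∃ a ∈ C₁, G.Adj a x)
    (h2X : ∀ x ∈ X, ∃ a ∈ C₂, G.Adj a x) :
    ∃ t, X ⊆ T.bag t ∧ (T.bag t ∩ C₁).Nonempty ∧ (T.bag t ∩ C₂).Nonempty := by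
  let B : X ⊕ Bool → Set V := fun k => match k with
    | .inl x => {x.1}
    | .inr true => C₁
    | .inr false => C₂
  obtain ⟨t, ht⟩ := bramble T B (by
      rintro (x | _ | _)
      · exact ⟨x.1, rfl⟩
      · exact h2n
      · exact h1n) (by
      rintro (x | _ | _)
      · rintro a rfl b rfl
        exact rrefl rfl
      · exact h2
      · exact h1) (by
      have sw : ∀ {P Q : Set V}, (∃ a ∈ P, ∃ b ∈ Q, a = b ∨ G.Adj a b) →
          ∃ a ∈ Q, ∃ b ∈ P, a = b ∨ G.Adj a b := by
        rintro P Q ⟨a, ha, b, hb, h⟩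
        exact ⟨b, hb, a, ha, h.imp Eq.symm SimpleGraph.Adj.symm⟩
      have e1 : ∀ x ∈ X, ∃ a ∈ C₁, ∃ b ∈ ({x} : Set V), a = b ∨ G.Adj a b := fun x hx => by
        obtain ⟨a, ha, h⟩ := h1X x hx
        exact ⟨a, ha, x, rfl, .inr h⟩
      have e2 : ∀ x ∈ X, ∃ a ∈ C₂, ∃ b ∈ ({x} : Set V), a = b ∨ G.Adj a b := fun x hx => by
        obtain ⟨a, ha, h⟩ := h2X x hx
        exact ⟨a, ha, x, rfl, .inr h⟩
      rintro (x | _ | _) (y | _ | _)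
      · refine ⟨x.1, rfl, y.1, rfl, ?_⟩
        by_cases hxy : x.1 = y.1
        · exact .inl hxy
        · exact .inr (hX _ x.2 _ y.2 hxy)
      · exact sw (e2 _ x.2)
      · exact sw (e1 _ x.2)
      · exact e2 _ y.2
      · obtain ⟨a, ha⟩ := h2n
        exact ⟨a, ha, a, ha, .inl rfl⟩
      · exact sw h12
      · exact e1 _ y.2
      · exact h12
      · obtain ⟨a, ha⟩ := h1n
        exact ⟨a, ha, a, ha, .inl rfl⟩)
  refine ⟨t, fun x hx => ?_, ht (.inr true), ht (.inr false)⟩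
  obtain ⟨y, hy, hyx⟩ := ht (.inl ⟨x, hx⟩)
  have : y = x := hyx
  rwa [← this]

end helly

section upper
variable {V : Type} {G : SimpleGraph V}

lemma exists_parent {T : Type} {H : SimpleGraph T} (hH : H.IsTree) (r : T) :
    ∃ p : T → T, p r = r ∧ (∀ t, ∃ n : ℕ, p^[n] t = r) ∧ (∀ t, t ≠ r → H.Adj t (p t)) ∧
      ∀ a b, H.Adj a b → p a = b ∨ p b = a := by
  choose f hf hfl using fun w => hH.connected.exists_path_of_dist w r
  have huniq : ∀ {w} (q : H.Walk w r), q.IsPath → q = f w := fun q hq =>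
    (hH.existsUnique_path _ _).unique hq (hf _)
  have hadj : ∀ t, t ≠ r → H.Adj t (f t).snd := fun t ht =>
    SimpleGraph.Walk.adj_snd (SimpleGraph.Walk.not_nil_of_ne ht)
  have hlt : ∀ t, t ≠ r → H.dist (f t).snd r < H.dist t r := by
    intro t ht
    have h1 := SimpleGraph.dist_le (f t).tail
    have h2 := SimpleGraph.Walk.length_tail_add_one (SimpleGraph.Walk.not_nil_of_ne ht (p := f t))
    have h3 := hfl t
    omega
  have hr : (f r).snd = r := by
    rw [← huniq .nil .nil]
    rfl
  refine ⟨fun t => (f t).snd, hr, ?_, hadj, ?_⟩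
  · intro t
    induction hn : H.dist t r using Nat.strong_induction_on generalizing t with
    | _ n ih =>
      by_cases ht : t = r
      · exact ⟨0, ht⟩
      · obtain ⟨k, hk⟩ := ih _ (hn ▸ hlt t ht) (f t).snd rfl
        exact ⟨k + 1, hk⟩
  · have key : ∀ a b, H.Adj a b → H.dist a r = H.dist b r + 1 → (f a).snd = b := by
      intro a b hab hd
      have hl : (SimpleGraph.Walk.cons hab (f b)).length = H.dist a r := by
        rw [SimpleGraph.Walk.length_cons, hfl, hd]
      rw [← huniq _ (SimpleGraph.Walk.isPath_of_length_eq_dist _ hl)]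
      simp
    intro a b hab
    have := hH.dist_eq_dist_add_one_of_adj r hab
    rw [SimpleGraph.dist_comm (u := r) (v := a), SimpleGraph.dist_comm (u := r) (v := b)] at this
    rcases this with h | h
    · exact .inl (key a b hab h)
    · exact .inr (key b a hab.symm h)

lemma build (X : Set V) (hT : (G.induce Xᶜ).IsTree) (r : ↥Xᶜ)
    (p : ↥Xᶜ → ↥Xᶜ) (hr : p r = r) (hreach : ∀ t, ∃ n : ℕ, p^[n] t = r)
    (hp : ∀ a b, (G.induce Xᶜ).Adj a b → p a = b ∨ p b = a)
    (Y : ↥Xᶜ → Set V) (hYX : ∀ t, Y t ⊆ X) (hYr : Y r = X) (hYp : ∀ t, Y t ⊆ Y (p t))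
    (hYN : ∀ t : ↥Xᶜ, ∀ x ∈ X, G.Adj t x → x ∈ Y t) :
    ∃ T : RootedTreeDecomp V ↥Xᶜ G, ∀ t, T.bag t = {t.1, (p t).1} ∪ Y t := by
  have hcx : ∀ (c : V) (hc : c ∉ X) (x : V), x ∈ X → G.Adj c x →
      ∃ t : ↥Xᶜ, c ∈ ({t.1, (p t).1} ∪ Y t : Set V) ∧ x ∈ ({t.1, (p t).1} ∪ Y t : Set V) :=
    fun c hc x hx h => ⟨⟨c, hc⟩, by simp, .inr (hYN ⟨c, hc⟩ x hx h)⟩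
  refine ⟨⟨r, p, hr, hreach, fun t => {t.1, (p t).1} ∪ Y t, ?_, ?_, ?_⟩, fun t => rfl⟩
  · intro v
    by_cases hv : v ∈ X
    · exact ⟨r, .inr (hYr ▸ hv)⟩
    · exact ⟨⟨v, hv⟩, by simp⟩
  · intro u v huv
    by_cases hu : u ∈ X <;> by_cases hv : v ∈ X
    · exact ⟨r, .inr (hYr ▸ hu), .inr (hYr ▸ hv)⟩
    · obtain ⟨t, h1, h2⟩ := hcx v hv u hu huv.symm
      exact ⟨t, h2, h1⟩
    · exact hcx u hu v hv huv
    · rcases hp ⟨u, hu⟩ ⟨v, hv⟩ huv with h | h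
      · exact ⟨⟨u, hu⟩, by simp, by simp [h]⟩
      · exact ⟨⟨v, hv⟩, by simp [h], by simp⟩
  · intro v
    by_cases hv : v ∈ X
    · refine ⟨r, .inr (hYr ▸ hv), fun t ht => ?_⟩
      have ht' : v ∈ Y t := by
        rcases ht with (rfl | h) | h
        · exact absurd hv t.2
        · have : v = (p t).1 := h
          exact absurd hv (this ▸ (p t).2)
        · exact h
      obtain ⟨n, hn⟩ := hreach t
      refine ⟨n, hn, fun i _ => .inr ?_⟩
      clear hn
      induction i with
      | zero => exact ht'
      | succ i ih =>
        rw [Function.iterate_succ_apply']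
        exact hYp _ (ih (by omega))
    · refine ⟨⟨v, hv⟩, by simp, fun t ht => ?_⟩
      rcases ht with (h | h) | h
      · refine ⟨0, Subtype.ext h.symm, fun i hi => ?_⟩
        obtain rfl : i = 0 := by omega
        exact .inl (.inl h)
      · have h : v = (p t).1 := h
        refine ⟨1, Subtype.ext h.symm, fun i hi => ?_⟩
        obtain rfl | rfl : i = 0 ∨ i = 1 := by omega
        · exact .inl (.inr h)
        · exact .inl (.inl h)
      · exact absurd (hYX t h) hv

lemma card_le [Finite V] (a b : V) (Y : Set V) : ({a, b} ∪ Y : Set V).ncard ≤ Y.ncard + 2 := by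
  have h1 := Set.ncard_union_le {a, b} Y
  have h2 : ({a, b} : Set V).ncard ≤ 2 := by
    have := Set.ncard_insert_le a {b}
    rw [Set.ncard_singleton] at this
    exact this
  omega

lemma upper_general [Finite V] (X : Set V) (hT : (G.induce Xᶜ).IsTree) :
    G.TreewidthAtMost (X.ncard + 1) := by
  obtain ⟨r⟩ := hT.connected.nonempty
  obtain ⟨p, hr, hreach, -, hp⟩ := exists_parent hT r
  obtain ⟨T, hTb⟩ := build X hT r p hr hreach hp (fun _ => X) (fun _ => subset_rfl) rfl
    (fun _ => subset_rfl) (fun _ x hx _ => hx)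
  refine ⟨_, T, fun t => ?_⟩
  rw [hTb]
  exact card_le _ _ _

lemma upper_cond [Finite V] (X : Set V) (hT : (G.induce Xᶜ).IsTree) (v : V) (hv : v ∉ X)
    (hc : ∀ w, w ∉ X → w ≠ v →
      ∃ u ∈ X, G.nbhdSet (G.compOutside (X ∪ {v}) w) ⊆ (X ∪ {v}) \ {u}) :
    G.TreewidthAtMost X.ncard := by
  classical
  obtain ⟨p, hr, hreach, hpadj, hp⟩ := exists_parent hT ⟨v, hv⟩
  have : ∃ F : Set V → V, ∀ w, w ∉ X → w ≠ v → F (G.compOutside (X ∪ {v}) w) ∈ X ∧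
      G.nbhdSet (G.compOutside (X ∪ {v}) w) ⊆ (X ∪ {v}) \ {F (G.compOutside (X ∪ {v}) w)} := by
    refine ⟨fun S => if h : ∃ u ∈ X, G.nbhdSet S ⊆ (X ∪ {v}) \ {u} then h.choose else v, ?_⟩
    intro w hw hwv
    have h := hc w hw hwv
    simp only [dif_pos h]
    exact h.choose_spec
  obtain ⟨F, hF⟩ := this
  let Y : ↥Xᶜ → Set V := fun t => if t.1 = v then X else X \ {F (G.compOutside (X ∪ {v}) t.1)}
  have hYX : ∀ t, Y t ⊆ X := by
    intro t
    by_cases h : t.1 = v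
    · simp [Y, h]
    · simp only [Y, if_neg h]
      exact Set.diff_subset
  obtain ⟨T, hTb⟩ := build X hT ⟨v, hv⟩ p hr hreach hp Y hYX (by simp [Y]) (by
      intro t
      by_cases h : (p t).1 = v
      · simpa [Y, h] using hYX t
      by_cases h' : t.1 = v
      · obtain rfl : t = ⟨v, hv⟩ := Subtype.ext h'
        rw [hr]
      · simp only [Y, if_neg h, if_neg h']
        have hadj : G.Adj t.1 (p t).1 := hpadj t (fun e => h' (by rw [e]))
        have hin : t.1 ∈ (X ∪ {v})ᶜ := by
          rintro (h1 | h1)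
          · exact t.2 h1
          · exact h' h1
        have hin2 : (p t).1 ∈ (X ∪ {v})ᶜ := by
          rintro (h1 | h1)
          · exact (p t).2 h1
          · exact h h1
        have : G.compOutside (X ∪ {v}) t.1 = G.compOutside (X ∪ {v}) (p t).1 := by
          ext z
          exact ⟨fun hz => rtrans (radj hadj.symm hin2 hin) hz,
            fun hz => rtrans (radj hadj hin hin2) hz⟩
        rw [this]) (by
      intro t x hx htx
      by_cases h' : t.1 = v
      · simpa [Y, h'] using hx
      · simp only [Y, if_neg h']
        refine ⟨hx, ?_⟩
        have hin : t.1 ∈ (X ∪ {v})ᶜ := by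
          rintro (h1 | h1)
          · exact t.2 h1
          · exact h' h1
        exact ((hF t.1 t.2 h').2 ⟨fun hh => rright hh (.inl hx), t.1, rrefl hin, htx⟩).2)
  refine ⟨_, T, fun t => ?_⟩
  rw [hTb]
  by_cases h' : t.1 = v
  · obtain rfl : t = ⟨v, hv⟩ := Subtype.ext h'
    rw [hr]
    simp only [Y, if_true, Set.pair_eq_singleton]
    rw [Set.singleton_union]
    exact Set.ncard_insert_le _ _
  · have h1 := card_le t.1 (p t).1 (Y t)
    have h2 : (Y t).ncard + 1 = X.ncard := by
      simp only [Y, if_neg h']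
      exact Set.ncard_diff_singleton_add_one (hF t.1 t.2 h').1
    omega

end upper

section lower
variable {V : Type} {G : SimpleGraph V}

lemma lower_one [Finite V] (X : Set V) (hXne : X.Nonempty)
    (hX : ∀ u ∈ X, ∀ v ∈ X, u ≠ v → G.Adj u v)
    (hconn : (G.induce Xᶜ).Connected) (hN : G.nbhdSet Xᶜ = X) :
    ¬ G.TreewidthAtMost (X.ncard - 1) := by
  rintro ⟨ι, T, hT⟩
  obtain ⟨c, hc⟩ := hconn.nonempty
  have hr : ∀ a ∈ Xᶜ, ∀ b ∈ Xᶜ, G.ReachableIn Xᶜ a b := fun a ha b hb => rinduce hconn ha hb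
  have hXX : ∀ x ∈ X, ∃ a ∈ Xᶜ, G.Adj a x := by
    intro x hx
    rw [← hN] at hx
    exact hx.2
  obtain ⟨t, h1, ⟨y, hy, hyX⟩, -⟩ := cliqueBag T X Xᶜ Xᶜ hX hr hr ⟨c, hc⟩ ⟨c, hc⟩
    ⟨c, hc, c, hc, .inl rfl⟩ hXX hXX
  have h2 := hT t
  have h3 : (insert y X).ncard ≤ (T.bag t).ncard :=
    Set.ncard_le_ncard (Set.insert_subset hy h1) (Set.toFinite _)
  rw [Set.ncard_insert_of_notMem hyX (Set.toFinite _)] at h3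
  have := (Set.ncard_pos (Set.toFinite X)).2 hXne
  omega

lemma del_reach {X : Set V} {v w a b : V} (hv : v ∉ X) (hw : w ∉ X)
    (h : G.ReachableIn (X ∪ {v})ᶜ a b) :
    ∃ (ha : a ∉ X) (hb : b ∉ X), ((G.induce Xᶜ).deleteEdges {s(⟨v, hv⟩, ⟨w, hw⟩)}).Reachable
      ⟨a, ha⟩ ⟨b, hb⟩ := by
  have ha : a ∉ X := fun h' => rleft h (.inl h')
  refine ⟨ha, ?_⟩
  refine rind (P := fun b => ∃ (hb : b ∉ X),
    ((G.induce Xᶜ).deleteEdges {s(⟨v, hv⟩, ⟨w, hw⟩)}).Reachable ⟨a, ha⟩ ⟨b, hb⟩) h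
    ⟨ha, SimpleGraph.Reachable.refl _⟩ ?_
  rintro x y hxy hx hy ⟨hxX, hr⟩
  have hyX : y ∉ X := fun h' => hy (.inl h')
  refine ⟨hyX, hr.trans (SimpleGraph.Adj.reachable ?_)⟩
  rw [SimpleGraph.deleteEdges_adj]
  refine ⟨hxy, ?_⟩
  have h1 : x ≠ v := fun e => hx (.inr e)
  have h2 : y ≠ v := fun e => hy (.inr e)
  simp [h1, h2]

/-- crossing a tree edge: `w` reaches `y` avoiding `v`, then `y` reaches `v` avoiding `w`. -/
lemma no_cross {X : Set V} (hac : (G.induce Xᶜ).IsAcyclic) {v w y : V} (hv : v ∉ X) (hw : w ∉ X)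
    (hvw : G.Adj v w) (h1 : G.ReachableIn (X ∪ {v})ᶜ w y) (h2 : G.ReachableIn (X ∪ {w})ᶜ v y) :
    False := by
  obtain ⟨_, _, r1⟩ := del_reach hv hw h1
  obtain ⟨_, _, r2⟩ := del_reach hw hv h2
  rw [Sym2.eq_swap] at r2
  have := SimpleGraph.isAcyclic_iff_forall_adj_isBridge.1 hac
    (show (G.induce Xᶜ).Adj ⟨v, hv⟩ ⟨w, hw⟩ from hvw)
  rw [SimpleGraph.isBridge_iff] at this
  exact this (r2.trans r1.symm)

lemma first_step {X : Set V} {v w : V} (h : G.ReachableIn Xᶜ v w) (hwv : w ≠ v) :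
    ∃ z, G.Adj v z ∧ z ∉ X ∧ G.ReachableIn (X ∪ {v})ᶜ z w := by
  have := rind (P := fun w => w = v ∨ ∃ z, G.Adj v z ∧ z ∉ X ∧ G.ReachableIn (X ∪ {v})ᶜ z w) h
    (.inl rfl) ?_
  · exact this.resolve_left hwv
  · intro x y hxy hx hy hP
    by_cases hyv : y = v
    · exact .inl hyv
    have hyin : y ∈ (X ∪ {v})ᶜ := by
      rintro (h1 | h1)
      · exact hy h1
      · exact hyv h1
    right
    rcases hP with rfl | ⟨z, h1, h2, h3⟩
    · exact ⟨y, hxy, hy, rrefl hyin⟩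
    · exact ⟨z, h1, h2, rtrans h3 (radj hxy (rright h3) hyin)⟩

lemma lower_two [Finite V] (X : Set V)
    (hX : ∀ u ∈ X, ∀ v ∈ X, u ≠ v → G.Adj u v)
    (hconn : (G.induce Xᶜ).Connected) (hac : (G.induce Xᶜ).IsAcyclic)
    (hc : ¬ ∃ v, v ∉ X ∧ ∀ w, w ∉ X → w ≠ v →
      ∃ u ∈ X, G.nbhdSet (G.compOutside (X ∪ {v}) w) ⊆ (X ∪ {v}) \ {u}) :
    ¬ G.TreewidthAtMost X.ncard := by
  rintro ⟨ι, T, hT⟩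
  -- every vertex has a full direction
  have dir : ∀ v, v ∉ X → ∃ z, G.Adj v z ∧ z ∉ X ∧
      ∀ x ∈ X, ∃ a ∈ G.compOutside (X ∪ {v}) z, G.Adj a x := by
    intro v hv
    by_contra hcon
    refine hc ⟨v, hv, fun w hw hwv => ?_⟩
    by_contra hno
    obtain ⟨z, hvz, hz, hzw⟩ := first_step (rinduce hconn (a := v) (b := w) hv hw) hwv
    refine hcon ⟨z, hvz, hz, fun x hx => ?_⟩
    by_contra hxa
    refine hno ⟨x, hx, ?_⟩
    rintro y ⟨hy, a, ha, hay⟩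
    have ha' : G.ReachableIn (X ∪ {v})ᶜ w a := ha
    refine ⟨?_, ?_⟩
    · by_contra hyn
      exact hy (rtrans ha' (radj hay (rright ha') hyn))
    · intro hyx
      have : y = x := hyx
      subst this
      exact hxa ⟨a, rtrans hzw ha', hay⟩
  -- choose minimal full direction
  let S : Set (V × V) := {q | q.1 ∉ X ∧ q.2 ∉ X ∧ G.Adj q.1 q.2 ∧
    ∀ x ∈ X, ∃ a ∈ G.compOutside (X ∪ {q.1}) q.2, G.Adj a x}
  have hS : S.Nonempty := by
    obtain ⟨c, hcX⟩ := hconn.nonempty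
    obtain ⟨z, h1, h2, h3⟩ := dir c hcX
    exact ⟨(c, z), hcX, h2, h1, h3⟩
  obtain ⟨⟨v, w⟩, ⟨hv, hw, hvw, hfull⟩, hmin⟩ := Set.exists_min_image S
    (fun q => (G.compOutside (X ∪ {q.1}) q.2).ncard) (Set.toFinite _) hS
  simp only at hv hw hvw hfull hmin
  obtain ⟨z, hwz, hz, hzfull⟩ := dir w hw
  have inn : ∀ {a b : V}, a ∉ X → a ≠ b → a ∈ (X ∪ {b})ᶜ := by
    rintro a b h1 h2 (h | h)
    · exact h1 h
    · exact h2 h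
  by_cases hzv : z = v
  · subst hzv
    obtain ⟨t, hXt, ⟨a, hat, ha⟩, ⟨b, hbt, hb⟩⟩ := cliqueBag T X (G.compOutside (X ∪ {z}) w)
      (G.compOutside (X ∪ {w}) z) hX (fun a ha b hb => compConn ha hb)
      (fun a ha b hb => compConn ha hb) ⟨w, rrefl (inn hw hwz.ne)⟩ ⟨z, rrefl (inn hz hvw.ne)⟩
      ⟨w, rrefl (inn hw hwz.ne), z, rrefl (inn hz hvw.ne), .inr hwz⟩ hfull hzfull
    have hab : a ≠ b := by
      rintro rfl
      exact no_cross hac hz hw hvw ha hb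
    have haX : a ∉ X := fun h => rright ha (.inl h)
    have hbX : b ∉ X := fun h => rright hb (.inl h)
    have h3 : (insert a (insert b X)).ncard ≤ (T.bag t).ncard :=
      Set.ncard_le_ncard (Set.insert_subset hat (Set.insert_subset hbt hXt)) (Set.toFinite _)
    rw [Set.ncard_insert_of_notMem (by simp [hab, haX]) (Set.toFinite _),
      Set.ncard_insert_of_notMem hbX (Set.toFinite _)] at h3
    have := hT t
    omega
  · have hle := hmin (w, z) ⟨hw, hz, hwz, hzfull⟩
    simp only at hle
    have hzw : z ∈ (X ∪ {w})ᶜ := inn hz hwz.ne'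
    have hwv : w ∈ (X ∪ {v})ᶜ := inn hw hvw.ne'
    have hzv' : z ∈ (X ∪ {v})ᶜ := inn hz hzv
    have hsub : G.compOutside (X ∪ {w}) z ⊆ G.compOutside (X ∪ {v}) w := by
      intro y hy
      have hy' : G.ReachableIn (X ∪ {w})ᶜ z y := hy
      refine rind (P := fun y => G.ReachableIn (X ∪ {v})ᶜ w y) (rself hy') (radj hwz hwv hzv') ?_
      intro a b hab ha hb hP
      have hb' : G.ReachableIn (X ∪ {w})ᶜ z b := hb
      refine rtrans hP (radj hab (rright hP) ?_)
      rintro (h | h)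
      · exact rright hb' (.inl h)
      · have : b = v := h
        subst this
        exact no_cross hac hv hw hvw (radj hwz hwv hzv') (rsymm hb')
    have hss : G.compOutside (X ∪ {w}) z ⊂ G.compOutside (X ∪ {v}) w := by
      refine ⟨hsub, fun h => ?_⟩
      have : G.ReachableIn (X ∪ {w})ᶜ z w := h (rrefl hwv)
      exact rright this (.inr rfl)
    have := Set.ncard_lt_ncard hss (Set.toFinite _)
    omega

end lower

end TWAux

/-- Let `X ⊆ V` be nonempty with `G[X]` complete, `C := G − X` a
tree, and `N_G(V(C)) = X`.  If there is a vertex `v` of `C` such that every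
connected component `C'` of `C − v` has `N_G(V(C')) ⊆ (X ∪ {v}) ∖ {u}` for some
`u ∈ X`, then `tw(G) = |X|`; otherwise `tw(G) = |X| + 1`. -/
theorem statement13 {V : Type} [Fintype V] [DecidableEq V] (G : SimpleGraph V)
    (X : Set V) (hXne : X.Nonempty)
    (hcomplete : ∀ u ∈ X, ∀ v ∈ X, u ≠ v → G.Adj u v)
    (htreeConn : (G.induce Xᶜ).Connected) (htreeAcyc : (G.induce Xᶜ).IsAcyclic)
    (hN : G.nbhdSet Xᶜ = X)
    (cond : Prop)
    (hcond : cond ↔ ∃ v, v ∉ X ∧ ∀ w, w ∉ X → w ≠ v →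
      ∃ u ∈ X, G.nbhdSet (G.compOutside (X ∪ {v}) w) ⊆ (X ∪ {v}) \ {u}) :
    (cond → G.TreewidthAtMost X.ncard ∧ ¬G.TreewidthAtMost (X.ncard - 1)) ∧
    (¬cond → G.TreewidthAtMost (X.ncard + 1) ∧ ¬G.TreewidthAtMost X.ncard) := by
  have hT : (G.induce Xᶜ).IsTree := ⟨htreeConn, htreeAcyc⟩
  refine ⟨fun h => ⟨?_, TWAux.lower_one X hXne hcomplete htreeConn hN⟩,
    fun h => ⟨TWAux.upper_general X hT,
      TWAux.lower_two X hcomplete htreeConn htreeAcyc (fun h' => h (hcond.2 h'))⟩⟩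
  obtain ⟨v, hv, hc⟩ := hcond.1 h
  exact TWAux.upper_cond X hT v hv hc
end

section
/- Let G=(V,E) be a graph and let K ⊆ V be such that G[K] is a complete graph. Suppose A and B are disjoint nonempty subsets of V ∖ K such that G[A] and G[B] are connected, every vertex of K has a neighbor in A, every vertex of K has a neighbor in B, and A and B lie in the same connected component of G − K. Then tw(G) ≥ |K| + 1. -/
namespace RTDAux

variable {V ι : Type} {G : SimpleGraph V}

/-- Nodes whose bag meets `W`. -/
def N (𝒯 : RootedTreeDecomp V ι G) (W : Set V) : Set ι := {t | ∃ w ∈ W, w ∈ 𝒯.bag t}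

lemma union_aux (𝒯 : RootedTreeDecomp V ι G) {S₁ S₂ : Set ι} {m₁ m₂ t : ι}
    (h₁ : ∀ s ∈ S₁, ∃ n : ℕ, 𝒯.parent^[n] s = m₁ ∧ ∀ i ≤ n, 𝒯.parent^[i] s ∈ S₁)
    (hm₂ : m₂ ∈ S₂)
    (h₂ : ∀ s ∈ S₂, ∃ n : ℕ, 𝒯.parent^[n] s = m₂ ∧ ∀ i ≤ n, 𝒯.parent^[i] s ∈ S₂)
    {n₁ n₂ : ℕ} (hn : n₁ ≤ n₂) (e₁ : 𝒯.parent^[n₁] t = m₁) (e₂ : 𝒯.parent^[n₂] t = m₂)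
    (c₂ : ∀ i ≤ n₂, 𝒯.parent^[i] t ∈ S₂) : 𝒯.ConnectedNodeSet (S₁ ∪ S₂) := by
  have key : ∀ j, 𝒯.parent^[j] m₁ = 𝒯.parent^[j + n₁] t := by
    intro j
    rw [Function.iterate_add_apply, e₁]
  refine ⟨m₂, Or.inr hm₂, ?_⟩
  rintro s (hs | hs)
  · obtain ⟨n, e, c⟩ := h₁ s hs
    refine ⟨(n₂ - n₁) + n, ?_, ?_⟩
    · rw [Function.iterate_add_apply, e, key, Nat.sub_add_cancel hn, e₂]
    · intro i hi
      by_cases h : i ≤ n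
      · exact Or.inl (c i h)
      · right
        have : i = (i - n) + n := by omega
        rw [this, Function.iterate_add_apply, e, key]
        exact c₂ _ (by omega)
  · obtain ⟨n, e, c⟩ := h₂ s hs
    exact ⟨n, e, fun i hi => Or.inr (c i hi)⟩

lemma union_conn (𝒯 : RootedTreeDecomp V ι G) {S₁ S₂ : Set ι}
    (h₁ : 𝒯.ConnectedNodeSet S₁) (h₂ : 𝒯.ConnectedNodeSet S₂) {t : ι}
    (t₁ : t ∈ S₁) (t₂ : t ∈ S₂) : 𝒯.ConnectedNodeSet (S₁ ∪ S₂) := by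
  obtain ⟨m₁, hm₁, h₁⟩ := h₁
  obtain ⟨m₂, hm₂, h₂⟩ := h₂
  obtain ⟨n₁, e₁, c₁⟩ := h₁ t t₁
  obtain ⟨n₂, e₂, c₂⟩ := h₂ t t₂
  rcases le_total n₁ n₂ with h | h
  · exact union_aux 𝒯 h₁ hm₂ h₂ h e₁ e₂ c₂
  · rw [Set.union_comm]
    exact union_aux 𝒯 h₂ hm₁ h₁ h e₂ e₁ c₁

lemma conn_single (𝒯 : RootedTreeDecomp V ι G) (v : V) : 𝒯.ConnectedNodeSet (N 𝒯 {v}) := by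
  obtain ⟨m, hm, h⟩ := 𝒯.bags_connected v
  refine ⟨m, ⟨v, rfl, hm⟩, ?_⟩
  rintro t ⟨w, rfl, ht⟩
  obtain ⟨n, e, c⟩ := h t ht
  exact ⟨n, e, fun i hi => ⟨w, rfl, c i hi⟩⟩

lemma conn_insert (𝒯 : RootedTreeDecomp V ι G) {U : Set V} {x y : V}
    (h : 𝒯.ConnectedNodeSet (N 𝒯 U)) (hx : x ∈ U) (hxy : G.Adj x y) :
    𝒯.ConnectedNodeSet (N 𝒯 (insert y U)) := by
  have e : N 𝒯 (insert y U) = N 𝒯 {y} ∪ N 𝒯 U := by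
    ext t
    simp [N]
  rw [e]
  obtain ⟨t, h1, h2⟩ := 𝒯.bags_of_edges hxy
  exact union_conn 𝒯 (conn_single 𝒯 y) h (t := t) ⟨y, rfl, h2⟩ ⟨x, hx, h1⟩

lemma walk_exit {u v : V} (p : G.Walk u v) (S : Set V) (hu : u ∈ S) (hv : v ∉ S) :
    ∃ x ∈ S, ∃ y, y ∉ S ∧ G.Adj x y ∧ y ∈ p.support := by
  induction p with
  | nil => exact absurd hu hv
  | @cons a b c h p ih =>
    by_cases hb : b ∈ S
    · obtain ⟨x, hx, y, hy, hxy, hs⟩ := ih hb hv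
      exact ⟨x, hx, y, hy, hxy, by simp [hs]⟩
    · exact ⟨a, hu, b, hb, h, by simp⟩

lemma conn_of_connected [Finite V] (𝒯 : RootedTreeDecomp V ι G) {W : Set V}
    (hW : (G.induce W).Connected) : 𝒯.ConnectedNodeSet (N 𝒯 W) := by
  obtain ⟨⟨a, ha⟩⟩ := hW.nonempty
  obtain ⟨U, -, hU⟩ := (Set.toFinite {U : Set V | U ⊆ W ∧ 𝒯.ConnectedNodeSet (N 𝒯 U)
    }).exists_le_maximal (a := {a}) ⟨by simpa using ha, conn_single 𝒯 a⟩
  obtain ⟨⟨hUW, hUc⟩, hmax⟩ := hU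
  suffices W ⊆ U by rwa [← hUW.antisymm this]
  by_contra hne
  obtain ⟨w, hw, hwU⟩ := Set.not_subset.1 hne
  have hUn : U.Nonempty := by
    obtain ⟨m, ⟨u, hu, _⟩, _⟩ := hUc
    exact ⟨u, hu⟩
  obtain ⟨u, hu⟩ := hUn
  obtain ⟨p⟩ := hW.preconnected ⟨u, hUW hu⟩ ⟨w, hw⟩
  obtain ⟨x, hx, y, hy, hxy, -⟩ := walk_exit p {z | z.1 ∈ U} hu hwU
  have hxy' : G.Adj x.1 y.1 := hxy
  exact hy (hmax ⟨Set.insert_subset y.2 hUW, conn_insert 𝒯 hUc hx hxy'⟩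
    (Set.subset_insert _ _) (Set.mem_insert _ _))

open Classical in
lemma depth_exists (𝒯 : RootedTreeDecomp V ι G) :
    ∃ d : ι → ℕ, ∀ t n, 0 < n → d t ≤ d (𝒯.parent^[n] t) → 𝒯.parent^[n] t = t := by
  have hroot : ∀ n, 𝒯.parent^[n] 𝒯.root = 𝒯.root := fun n =>
    Function.iterate_fixed 𝒯.parent_root n
  refine ⟨fun t => Nat.find (𝒯.reaches_root t), ?_⟩
  intro t n hn hle
  have ht := Nat.find_spec (𝒯.reaches_root t)
  by_cases h0 : Nat.find (𝒯.reaches_root t) = 0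
  · rw [h0] at ht
    have ht : t = 𝒯.root := ht
    rw [ht, hroot]
  · exfalso
    have : Nat.find (𝒯.reaches_root (𝒯.parent^[n] t)) ≤ Nat.find (𝒯.reaches_root t) - 1 := by
      apply Nat.find_min'
      rw [← Function.iterate_add_apply]
      have e : Nat.find (𝒯.reaches_root t) - 1 + n
        = (n - 1) + Nat.find (𝒯.reaches_root t) := by omega
      rw [e, Function.iterate_add_apply, ht, hroot]
    have hle : Nat.find (𝒯.reaches_root t) ≤ Nat.find (𝒯.reaches_root (𝒯.parent^[n] t)) := hle
    omega

lemma helly (𝒯 : RootedTreeDecomp V ι G) {J : Type} [Finite J] [Nonempty J] (S : J → Set ι)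
    (hS : ∀ j, 𝒯.ConnectedNodeSet (S j)) (hI : ∀ i j, (S i ∩ S j).Nonempty) :
    ∃ t, ∀ j, t ∈ S j := by
  obtain ⟨d, hd⟩ := depth_exists 𝒯
  choose m hm h using hS
  obtain ⟨i, hi⟩ := Finite.exists_max (fun j => d (m j))
  refine ⟨m i, fun j => ?_⟩
  obtain ⟨t, t1, t2⟩ := hI i j
  obtain ⟨n₁, e₁, c₁⟩ := h i t t1
  obtain ⟨n₂, e₂, c₂⟩ := h j t t2
  by_cases hle : n₁ ≤ n₂
  · rw [← e₁]
    exact c₂ _ hle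
  · have e : 𝒯.parent^[n₁ - n₂] (m j) = m i := by
      rw [← e₂, ← Function.iterate_add_apply, Nat.sub_add_cancel (by omega), e₁]
    have := hd (m j) (n₁ - n₂) (by omega) (by rw [e]; exact hi j)
    rw [← e, this]
    exact hm j

lemma meet_of_adj (𝒯 : RootedTreeDecomp V ι G) {U W : Set V} {x y : V} (hx : x ∈ U) (hy : y ∈ W)
    (h : G.Adj x y) : (N 𝒯 U ∩ N 𝒯 W).Nonempty := by
  obtain ⟨t, h1, h2⟩ := 𝒯.bags_of_edges h
  exact ⟨t, ⟨x, hx, h1⟩, ⟨y, hy, h2⟩⟩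

end RTDAux

/-- If `G[K]` is complete and `A, B` are disjoint nonempty
connected subsets of `V ∖ K` such that every vertex of `K` has a neighbor in `A`
and a neighbor in `B`, and `A` and `B` lie in the same connected component of
`G − K`, then `tw(G) ≥ |K| + 1`. -/
theorem statement14 {V : Type} [Fintype V] [DecidableEq V] (G : SimpleGraph V)
    (K A B : Set V)
    (hcomplete : ∀ u ∈ K, ∀ v ∈ K, u ≠ v → G.Adj u v)
    (hA : A.Nonempty) (hB : B.Nonempty) (hAB : Disjoint A B)
    (hAK : Disjoint A K) (hBK : Disjoint B K)
    (hAconn : (G.induce A).Connected) (hBconn : (G.induce B).Connected)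
    (hKA : ∀ v ∈ K, ∃ a ∈ A, G.Adj v a)
    (hKB : ∀ v ∈ K, ∃ b ∈ B, G.Adj v b)
    (hsame : ∃ a ∈ A, ∃ b ∈ B, G.ReachableIn Kᶜ a b) :
    ¬G.TreewidthAtMost K.ncard := by
  classical
  rintro ⟨ι, 𝒯, hw⟩
  obtain ⟨C, hAC, hC⟩ := (Set.toFinite {U : Set V | Disjoint U B ∧ Disjoint U K ∧
    𝒯.ConnectedNodeSet (RTDAux.N 𝒯 U)}).exists_le_maximal (a := A)
    ⟨hAB, hAK, RTDAux.conn_of_connected 𝒯 hAconn⟩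
  obtain ⟨⟨hCB, hCK, hCc⟩, hmax⟩ := hC
  have hBc := RTDAux.conn_of_connected 𝒯 hBconn
  have hedge : ∃ x ∈ C, ∃ y ∈ B, G.Adj x y := by
    obtain ⟨a, ha, b, hb, p, hp⟩ := hsame
    obtain ⟨x, hx, y, hy, hxy, hys⟩ := RTDAux.walk_exit p C (hAC ha)
      (fun h => Set.disjoint_left.1 hCB h hb)
    refine ⟨x, hx, y, ?_, hxy⟩
    by_contra hyB
    exact hy (hmax ⟨Set.disjoint_insert_left.2 ⟨hyB, hCB⟩,
      Set.disjoint_insert_left.2 ⟨hp y hys, hCK⟩, RTDAux.conn_insert 𝒯 hCc hx hxy⟩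
      (Set.subset_insert _ _) (Set.mem_insert _ _))
  obtain ⟨x, hx, y, hy, hxy⟩ := hedge
  let F : Option (Option K) → Set V := fun o =>
    match o with
    | none => C
    | some none => B
    | some (some v) => {v.1}
  have hself : ∀ W, 𝒯.ConnectedNodeSet (RTDAux.N 𝒯 W) →
      (RTDAux.N 𝒯 W ∩ RTDAux.N 𝒯 W).Nonempty := by
    rintro W ⟨m, hm, -⟩
    exact ⟨m, hm, hm⟩
  have hc : ∀ o, 𝒯.ConnectedNodeSet (RTDAux.N 𝒯 (F o)) := by
    rintro (_ | _ | v)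
    · exact hCc
    · exact hBc
    · exact RTDAux.conn_single 𝒯 v.1
  have hI : ∀ i j, (RTDAux.N 𝒯 (F i) ∩ RTDAux.N 𝒯 (F j)).Nonempty := by
    rintro (_ | _ | u) (_ | _ | v)
    · exact hself _ hCc
    · exact RTDAux.meet_of_adj 𝒯 hx hy hxy
    · obtain ⟨a, ha, hva⟩ := hKA v.1 v.2
      exact RTDAux.meet_of_adj 𝒯 (hAC ha) rfl hva.symm
    · exact RTDAux.meet_of_adj 𝒯 hy hx hxy.symm
    · exact hself _ hBc
    · obtain ⟨a, ha, hva⟩ := hKB v.1 v.2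
      exact RTDAux.meet_of_adj 𝒯 ha rfl hva.symm
    · obtain ⟨a, ha, hva⟩ := hKA u.1 u.2
      exact RTDAux.meet_of_adj 𝒯 rfl (hAC ha) hva
    · obtain ⟨a, ha, hva⟩ := hKB u.1 u.2
      exact RTDAux.meet_of_adj 𝒯 rfl ha hva
    · by_cases huv : u = v
      · subst huv
        exact hself _ (RTDAux.conn_single 𝒯 u.1)
      · exact RTDAux.meet_of_adj 𝒯 rfl rfl
          (hcomplete u.1 u.2 v.1 v.2 (fun h => huv (Subtype.ext h)))
  have hD : ∀ i j z, z ∈ F i → z ∈ F j → i = j := by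
    rintro (_ | _ | u) (_ | _ | v) z hi hj
    · rfl
    · exact (Set.disjoint_left.1 hCB hi hj).elim
    · have hj : z = v.1 := hj
      exact (Set.disjoint_left.1 hCK hi (hj ▸ v.2)).elim
    · exact (Set.disjoint_left.1 hCB hj hi).elim
    · rfl
    · have hj : z = v.1 := hj
      exact (Set.disjoint_left.1 hBK hi (hj ▸ v.2)).elim
    · have hi : z = u.1 := hi
      exact (Set.disjoint_left.1 hCK hj (hi ▸ u.2)).elim
    · have hi : z = u.1 := hi
      exact (Set.disjoint_left.1 hBK hj (hi ▸ u.2)).elim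
    · have hi : z = u.1 := hi
      have hj : z = v.1 := hj
      have : u = v := Subtype.ext (hi.symm.trans hj)
      rw [this]
  obtain ⟨t, ht⟩ := RTDAux.helly 𝒯 (fun o => RTDAux.N 𝒯 (F o)) hc hI
  choose f hf hft using ht
  have hinj : Function.Injective (fun o => (⟨f o, hft o⟩ : 𝒯.bag t)) := by
    intro i j hij
    have hij : f i = f j := congrArg Subtype.val hij
    exact hD i j (f i) (hf i) (hij ▸ hf j)
  have h1 := Nat.card_le_card_of_injective _ hinj
  have h2 : Nat.card (Option (Option K)) = K.ncard + 2 := by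
    rw [Finite.card_option, Finite.card_option, Nat.card_coe_set_eq]
  have h3 := hw t
  rw [h2, Nat.card_coe_set_eq] at h1
  omega
end

section
/- Let G=(V,E) be a connected graph, let S ⊆ V, and let 𝒯 be a slim S-nice tree decomposition of G of width k. Let (L^S, X^S, R^S) be an S-trace with L^S ≠ ∅ that occurs in 𝒯, let t_min be the bottom node of its directed path, write X_min = X_{t_min}, and let X_c be the union of the bags of the S-children of t_min. Assume that every connected component C of G − X_min with V(C) ∩ S = ∅ satisfies V(C) ∩ V_t = ∅ for every S-child t of t_min. Define V_L to be the set of all vertices v such that v ∈ L^S ∪ (X_c ∖ X_min) or v is connected in G − X_min to some vertex of L^S ∪ (X_c ∖ X_min). Then for every vertex v ∈ V: v ∈ V_L if and only if t_min has an S-child t with v ∈ V_t ∖ X_min. -/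
namespace RootedTreeDecomp

theorem aux_adj {V ι : Type} {G : SimpleGraph V} (𝒯 : RootedTreeDecomp V ι G) {p t : ι}
    (hp : 𝒯.parent t = p) {u w : V} (hu : u ∈ 𝒯.Vt t) (hup : u ∉ 𝒯.bag p)
    (h : G.Adj u w) : w ∈ 𝒯.Vt t := by
  obtain ⟨t'', ⟨j, hj⟩, hut⟩ := hu
  obtain ⟨t', hut', hwt'⟩ := 𝒯.bags_of_edges h
  obtain ⟨m, -, hm⟩ := 𝒯.bags_connected u
  obtain ⟨n, hn, hn'⟩ := hm t'' hut
  obtain ⟨n', hn1, -⟩ := hm t' hut'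
  refine ⟨t', ?_, hwt'⟩
  rcases Nat.lt_or_ge j n with hlt | hge
  · exfalso
    have := hn' (j + 1) hlt
    rw [Function.iterate_succ_apply', hj, hp] at this
    exact hup this
  · refine ⟨(j - n) + n', ?_⟩
    rw [Function.iterate_add_apply, hn1, ← hn, ← Function.iterate_add_apply,
      Nat.sub_add_cancel hge, hj]

theorem aux_walk {V ι : Type} {G : SimpleGraph V} (𝒯 : RootedTreeDecomp V ι G) {p t : ι}
    (hp : 𝒯.parent t = p) {u w : V} (q : G.Walk u w) (hq : ∀ x ∈ q.support, x ∈ (𝒯.bag p)ᶜ)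
    (hu : u ∈ 𝒯.Vt t) : w ∈ 𝒯.Vt t ∧ w ∉ 𝒯.bag p := by
  induction q with
  | nil => exact ⟨hu, hq _ (by simp)⟩
  | cons h q ih =>
    exact ih (fun x hx => hq x (by simp [hx]))
      (𝒯.aux_adj hp hu (hq _ (by simp)) h)

theorem aux_child {V ι : Type} {G : SimpleGraph V} (𝒯 : RootedTreeDecomp V ι G) {p : ι}
    {v : V} (hv : v ∈ 𝒯.Vt p) (hvp : v ∉ 𝒯.bag p) : ∃ t, 𝒯.IsParent p t ∧ v ∈ 𝒯.Vt t := by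
  classical
  obtain ⟨t', hex, hvt⟩ := hv
  have hex' : ∃ n : ℕ, 𝒯.parent^[n] t' = p := hex
  have hs := Nat.find_spec hex'
  have hmin := fun m => Nat.find_min hex' (m := m)
  generalize Nat.find hex' = n at hs hmin
  cases n with
  | zero =>
    simp only [Function.iterate_zero, id] at hs
    exact absurd (hs ▸ hvt) hvp
  | succ n =>
    have hs' := hs
    rw [Function.iterate_succ_apply'] at hs'
    refine ⟨𝒯.parent^[n] t', ⟨fun hr => ?_, hs'⟩, t', ⟨n, rfl⟩, hvt⟩
    apply hmin n (Nat.lt_succ_self n)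
    rw [hr, 𝒯.parent_root] at hs'
    rw [hr, hs']

end RootedTreeDecomp

/-- (Lemma `lem:vl` of the paper.)  With `tmin` the bottom node
of the directed path of an `S`-trace with nonempty `L`-part in a slim `S`-nice
tree decomposition of the connected graph `G`, under the `F`-component assumption,
a vertex lies in `V_L` if and only if it lies in `V_t ∖ X_{tmin}` for some
`S`-child `t` of `tmin`. -/
theorem statement15 {V ι : Type} [Fintype V] [DecidableEq V] {G : SimpleGraph V}
    (hconn : G.Connected) (S : Set V) (k : ℕ)
    (𝒯 : RootedTreeDecomp V ι G)
    (hnice : 𝒯.IsSNice S) (hslim : 𝒯.IsSlim S k) (hw : 𝒯.HasWidth k)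
    (tmin : ι)
    (hL : (𝒯.LS S tmin).Nonempty)
    (hbot : ∀ t', 𝒯.STrace S t' = 𝒯.STrace S tmin → 𝒯.InSubtree t' tmin)
    (hFcomp : ∀ v, v ∉ 𝒯.bag tmin → G.compOutside (𝒯.bag tmin) v ∩ S = ∅ →
      ∀ t, 𝒯.IsSChild S tmin t → v ∉ 𝒯.Vt t)
    (Xc VL : Set V)
    (hXc : Xc = {u | ∃ t, 𝒯.IsSChild S tmin t ∧ u ∈ 𝒯.bag t})
    (hVL : VL = {v | v ∈ 𝒯.LS S tmin ∪ (Xc \ 𝒯.bag tmin) ∨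
      ∃ u ∈ 𝒯.LS S tmin ∪ (Xc \ 𝒯.bag tmin), G.ReachableIn (𝒯.bag tmin)ᶜ v u}) :
    ∀ v : V, v ∈ VL ↔ ∃ t, 𝒯.IsSChild S tmin t ∧ v ∈ 𝒯.Vt t \ 𝒯.bag tmin := by
  intro v
  have key : ∀ u ∈ 𝒯.LS S tmin ∪ (Xc \ 𝒯.bag tmin),
      ∃ t, 𝒯.IsSChild S tmin t ∧ u ∈ 𝒯.Vt t \ 𝒯.bag tmin := by
    rintro u (⟨⟨hu, hub⟩, huS⟩ | ⟨hu, hub⟩)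
    · obtain ⟨t, ht, hut⟩ := 𝒯.aux_child hu hub
      refine ⟨t, ⟨ht, u, ?_, ?_⟩, hut, hub⟩
      · by_cases hb : u ∈ 𝒯.bag t
        · exact Or.inr ⟨hb, huS⟩
        · exact Or.inl ⟨⟨hut, hb⟩, huS⟩
      · rintro (⟨h, -⟩ | ⟨h, -⟩)
        · exact h hu
        · exact hub h
    · rw [hXc] at hu
      obtain ⟨t, ht, hut⟩ := hu
      exact ⟨t, ht, ⟨t, ⟨0, rfl⟩, hut⟩, hub⟩
  rw [hVL]
  constructor
  · rintro (h | ⟨u, hu, q, hq⟩)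
    · exact key v h
    · obtain ⟨t, ht, hut, -⟩ := key u hu
      refine ⟨t, ht, 𝒯.aux_walk ht.1.2 q.reverse (fun x hx => hq x (by simpa using hx)) hut⟩
  · rintro ⟨t, ht, hvt, hvb⟩
    have hne : G.compOutside (𝒯.bag tmin) v ∩ S ≠ ∅ := fun h => hFcomp v hvb h t ht hvt
    obtain ⟨s, ⟨q, hq⟩, hsS⟩ := Set.nonempty_iff_ne_empty.mpr hne
    obtain ⟨⟨t', ⟨n, hn⟩, hst⟩, hsb⟩ := 𝒯.aux_walk ht.1.2 q hq hvt
    refine Or.inr ⟨s, Or.inl ⟨⟨⟨t', ⟨n + 1, ?_⟩, hst⟩, hsb⟩, hsS⟩, q, hq⟩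
    rw [Function.iterate_succ_apply', hn, ht.1.2]
end

section
/- Let G=(V,E) be a connected graph, let S ⊆ V, and let 𝒯 be a slim S-nice tree decomposition of G of width k. Let (L^S, X^S, R^S) be an S-trace with L^S ≠ ∅ that occurs in 𝒯, with directed path from the top node t_max to the bottom node t_min; assume t_max has a parent t_p. Write X_max = X_{t_max}, X_p = X_{t_p}, X_min = X_{t_min}, and let X_c be the union of the bags of the S-children of t_min. Assume that every connected component C of G − X_min with V(C) ∩ S = ∅ satisfies V(C) ∩ V_t = ∅ for every S-child t of t_min, and that every connected component C of G − X_p with V(C) ∩ S = ∅ satisfies V(C) ∩ V_t = ∅ for every S-child t of t_p. Let X_path be the union of the vertex sets of the connected components C of G − (X_max ∪ X_p ∪ X_min) with V(C) ∩ S = ∅, N[V(C)] ∩ (X_c ∖ X_min) = ∅ and N(V(C)) ∖ X_p ≠ ∅, and set V_X = X_max ∪ X_p ∪ X_min ∪ X_path. Then for every vertex v ∈ V: v ∈ V_X if and only if v ∈ X_p, or both v ∈ V_{t_max} and v ∉ V_t ∖ X_min for every S-child t of t_min. -/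
namespace RootedTreeDecomp

theorem reach_transport {V : Type} {G : SimpleGraph V} {W : Set V} {u v : V}
    (h : G.ReachableIn W u v) (P : V → Prop) (hu : P u)
    (step : ∀ a b, a ∈ W → b ∈ W → G.Adj a b → P a → P b) : P v := by
  obtain ⟨p, hp⟩ := h
  induction p with
  | nil => exact hu
  | cons hadj q ih =>
    refine ih ?_ ?_
    · refine step _ _ (hp _ (by simp)) (hp _ (by simp)) hadj hu
    · intro x hx
      exact hp x (by simp [hx])

theorem reach_symm {V : Type} {G : SimpleGraph V} {W : Set V} {u v : V}
    (h : G.ReachableIn W u v) : G.ReachableIn W v u := by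
  obtain ⟨p, hp⟩ := h
  exact ⟨p.reverse, fun x hx => hp x (by simpa using hx)⟩

theorem reach_refl {V : Type} {G : SimpleGraph V} {W : Set V} {u : V}
    (h : u ∈ W) : G.ReachableIn W u u :=
  ⟨SimpleGraph.Walk.nil, fun x hx => by simp at hx; rwa [hx]⟩

theorem reach_step {V : Type} {G : SimpleGraph V} {W : Set V} {u v w : V}
    (h : G.ReachableIn W u v) (ha : G.Adj v w) (hw : w ∈ W) : G.ReachableIn W u w := by
  obtain ⟨p, hp⟩ := h
  refine ⟨p.concat ha, fun x hx => ?_⟩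
  rw [SimpleGraph.Walk.support_concat] at hx
  simp at hx
  rcases hx with hx | hx
  · exact hp x hx
  · rwa [hx]

theorem reach_mem {V : Type} {G : SimpleGraph V} {W : Set V} {u v : V}
    (h : G.ReachableIn W u v) : v ∈ W := by
  obtain ⟨p, hp⟩ := h
  exact hp v (by simp)

variable {V ι : Type} {G : SimpleGraph V} (T : RootedTreeDecomp V ι G)

theorem sep {t s : ι} {u : V} (hu : u ∈ T.Vt t) (hs : u ∈ T.bag s)
    (hn : ¬ T.InSubtree t s) : u ∈ T.bag t ∧ u ∈ T.bag (T.parent t) := by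
  obtain ⟨t', ⟨n, hnt⟩, hut⟩ := hu
  obtain ⟨m, hm, hall⟩ := T.bags_connected u
  obtain ⟨a, ha, ha'⟩ := hall t' hut
  obtain ⟨b, hb, hb'⟩ := hall s hs
  by_cases h : n < a
  · refine ⟨hnt ▸ ha' n h.le, ?_⟩
    have := ha' (n+1) h
    rwa [Function.iterate_succ_apply', hnt] at this
  · exfalso
    apply hn
    refine ⟨(n - a) + b, ?_⟩
    rw [Function.iterate_add_apply, hb, ← ha, ← Function.iterate_add_apply,
      Nat.sub_add_cancel (by omega), hnt]

theorem adj_Vt {t : ι} {c w : V} (ha : G.Adj c w) (hc : c ∈ T.Vt t)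
    (hn : c ∉ T.bag t ∨ c ∉ T.bag (T.parent t)) : w ∈ T.Vt t := by
  obtain ⟨s, h1, h2⟩ := T.bags_of_edges ha
  by_cases h : T.InSubtree t s
  · exact ⟨s, h, h2⟩
  · have := T.sep hc h1 h
    tauto

theorem root_iter (n : ℕ) : T.parent^[n] T.root = T.root :=
  Function.iterate_fixed T.parent_root n

theorem periodic {t : ι} {p : ℕ} (h : T.parent^[p+1] t = t) : t = T.root := by
  obtain ⟨n, hn⟩ := T.reaches_root t
  have h1 : T.parent^[(p+1)*n] t = t := by
    rw [Function.iterate_mul]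
    exact Function.iterate_fixed h n
  have h2 : (p+1)*n = p*n + n := by ring
  rw [h2, Function.iterate_add_apply, hn, root_iter] at h1
  exact h1.symm

theorem not_sub {t s r : ι} (hp : T.IsParent s t) (hs : T.InSubtree r s) :
    ¬ T.InSubtree t r := by
  rintro ⟨b, hb⟩
  obtain ⟨a, ha⟩ := hs
  apply hp.1
  apply T.periodic (p := b + a)
  rw [Function.iterate_succ_apply, hp.2, Function.iterate_add_apply, ha, hb]

theorem sub_trans {r s t : ι} (h : T.InSubtree r s) (h' : T.InSubtree s t) :
    T.InSubtree r t := by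
  obtain ⟨a, ha⟩ := h
  obtain ⟨b, hb⟩ := h'
  exact ⟨a + b, by rw [Function.iterate_add_apply, hb, ha]⟩

theorem Vt_mono {r s : ι} (h : T.InSubtree r s) : T.Vt s ⊆ T.Vt r := by
  rintro v ⟨t', h1, h2⟩
  exact ⟨t', T.sub_trans h h1, h2⟩

theorem Vt_child {t : ι} {v : V} (h : v ∈ T.Vt t) (hn : v ∉ T.bag t) :
    ∃ c, T.IsParent t c ∧ v ∈ T.Vt c := by
  obtain ⟨t', ⟨n, hnt⟩, hv⟩ := h
  induction n generalizing t with
  | zero => simp at hnt; subst hnt; exact absurd hv hn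
  | succ n ih =>
    by_cases hr : T.parent^[n] t' = T.root
    · have : t = T.root := by
        rw [← hnt, Function.iterate_succ_apply', hr, T.parent_root]
      exact ih hn (by rw [hr, this])
    · exact ⟨T.parent^[n] t', ⟨hr, by rw [← hnt, Function.iterate_succ_apply']⟩,
        t', ⟨n, rfl⟩, hv⟩

theorem bag_sub_Vt (t : ι) : T.bag t ⊆ T.Vt t := fun _ h => ⟨t, ⟨0, rfl⟩, h⟩

end RootedTreeDecomp

open RootedTreeDecomp

/-- (Lemma `lem:vx` of the paper.)  With `tmax` and `tmin` the
top and bottom nodes of the directed path of an `S`-trace with nonempty `L`-part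
in a slim `S`-nice tree decomposition of the connected graph `G`, with `tp` the
parent of `tmax`, under the `F`-component assumptions for `tmin` and `tp`, a
vertex lies in `V_X = X_max ∪ X_p ∪ X_min ∪ X_path` if and only if it lies in
`X_p`, or it lies in `V_{tmax}` and in no `V_t ∖ X_min` for an `S`-child `t` of
`tmin`. -/
theorem statement16 {V ι : Type} [Fintype V] [DecidableEq V] {G : SimpleGraph V}
    (hconn : G.Connected) (S : Set V) (k : ℕ)
    (𝒯 : RootedTreeDecomp V ι G)
    (hnice : 𝒯.IsSNice S) (hslim : 𝒯.IsSlim S k) (hw : 𝒯.HasWidth k)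
    (tmin tmax tp : ι)
    (hL : (𝒯.LS S tmin).Nonempty)
    (hbot : ∀ t', 𝒯.STrace S t' = 𝒯.STrace S tmin → 𝒯.InSubtree t' tmin)
    (htr : 𝒯.STrace S tmax = 𝒯.STrace S tmin)
    (htop : ∀ t', 𝒯.STrace S t' = 𝒯.STrace S tmin → 𝒯.InSubtree tmax t')
    (hp : 𝒯.IsParent tp tmax)
    (hFmin : ∀ v, v ∉ 𝒯.bag tmin → G.compOutside (𝒯.bag tmin) v ∩ S = ∅ →
      ∀ t, 𝒯.IsSChild S tmin t → v ∉ 𝒯.Vt t)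
    (hFp : ∀ v, v ∉ 𝒯.bag tp → G.compOutside (𝒯.bag tp) v ∩ S = ∅ →
      ∀ t, 𝒯.IsSChild S tp t → v ∉ 𝒯.Vt t)
    (Xc Y Xpath VX : Set V)
    (hXc : Xc = {u | ∃ t, 𝒯.IsSChild S tmin t ∧ u ∈ 𝒯.bag t})
    (hY : Y = 𝒯.bag tmax ∪ 𝒯.bag tp ∪ 𝒯.bag tmin)
    (hXpath : Xpath = {v | v ∉ Y ∧ G.compOutside Y v ∩ S = ∅ ∧
      (G.compOutside Y v ∪ G.nbhdSet (G.compOutside Y v)) ∩ (Xc \ 𝒯.bag tmin) = ∅ ∧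
      (G.nbhdSet (G.compOutside Y v) \ 𝒯.bag tp).Nonempty})
    (hVX : VX = Y ∪ Xpath) :
    ∀ v : V, v ∈ VX ↔ (v ∈ 𝒯.bag tp ∨
      (v ∈ 𝒯.Vt tmax ∧ ∀ t, 𝒯.IsSChild S tmin t → v ∉ 𝒯.Vt t \ 𝒯.bag tmin)) := by
  have hmm : 𝒯.InSubtree tmax tmin := htop tmin rfl
  have hpm : 𝒯.InSubtree tp tmax := ⟨1, hp.2⟩
  have hYdef : ∀ x, x ∈ Y ↔ (x ∈ 𝒯.bag tmax ∨ x ∈ 𝒯.bag tp) ∨ x ∈ 𝒯.bag tmin := by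
    intro x; rw [hY]; rfl
  -- vertices of Y below a child of tmin lie in the bag of tmin
  have hlow : ∀ t, 𝒯.IsParent tmin t → ∀ x, x ∈ 𝒯.Vt t → x ∈ Y → x ∈ 𝒯.bag tmin := by
    intro t ht x hx hxY
    rcases (hYdef x).1 hxY with (h | h) | h
    · have := (𝒯.sep hx h (𝒯.not_sub ht hmm)).2
      rwa [ht.2] at this
    · have := (𝒯.sep hx h (𝒯.not_sub ht (𝒯.sub_trans hpm hmm))).2
      rwa [ht.2] at this
    · exact h
  have hadj : ∀ t, 𝒯.IsParent tmin t → ∀ a b, G.Adj a b → a ∈ 𝒯.Vt t → a ∉ 𝒯.bag tmin →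
      b ∈ 𝒯.Vt t := by
    intro t ht a b hab ha han
    exact 𝒯.adj_Vt hab ha (Or.inr (by rwa [ht.2]))
  have hcompmax : ∀ a b, G.ReachableIn Yᶜ a b → a ∈ 𝒯.Vt tmax → b ∈ 𝒯.Vt tmax := by
    intro a b h ha
    refine reach_transport h (fun x => x ∈ 𝒯.Vt tmax) ha ?_
    intro c d hc hd hcd hcm
    exact 𝒯.adj_Vt hcd hcm (Or.inl (fun h' => hc ((hYdef c).2 (Or.inl (Or.inl h')))))
  have hcomplow : ∀ t, 𝒯.IsParent tmin t → ∀ a b, G.ReachableIn Yᶜ a b → a ∈ 𝒯.Vt t →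
      b ∈ 𝒯.Vt t := by
    intro t ht a b h ha
    refine reach_transport h (fun x => x ∈ 𝒯.Vt t) ha ?_
    intro c d hc hd hcd hcm
    exact hadj t ht c d hcd hcm (fun h' => hc ((hYdef c).2 (Or.inr h')))
  intro v
  constructor
  · intro hv
    by_cases hvY : v ∈ Y
    · rcases (hYdef v).1 hvY with (h | h) | h
      · exact Or.inr ⟨𝒯.bag_sub_Vt _ h, fun t ht h' => h'.2 (hlow t ht.1 v h'.1 hvY)⟩
      · exact Or.inl h
      · exact Or.inr ⟨𝒯.Vt_mono hmm (𝒯.bag_sub_Vt _ h), fun t ht h' => h'.2 h⟩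
    · right
      rw [hVX] at hv
      have hv' := hv.resolve_left hvY
      rw [hXpath] at hv'
      obtain ⟨-, hS, hX, w, ⟨hwC, c, hcC, hcw⟩, hwp⟩ := hv'
      have hwY : w ∈ Y := by
        by_contra h
        exact hwC (reach_step hcC hcw h)
      have hwmax : w ∈ 𝒯.Vt tmax := by
        rcases (hYdef w).1 hwY with (h | h) | h
        · exact 𝒯.bag_sub_Vt _ h
        · exact absurd h hwp
        · exact 𝒯.Vt_mono hmm (𝒯.bag_sub_Vt _ h)
      have hcmax : c ∈ 𝒯.Vt tmax :=
        𝒯.adj_Vt hcw.symm hwmax (Or.inr (by rwa [hp.2]))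
      refine ⟨hcompmax c v (reach_symm hcC) hcmax, ?_⟩
      intro t ht hvt
      refine hFmin v hvt.2 ?_ t ht hvt.1
      rw [Set.eq_empty_iff_forall_notMem] at hS ⊢
      rintro s ⟨hsC, hsS⟩
      refine hS s ⟨?_, hsS⟩
      refine (reach_transport hsC (fun x => G.ReachableIn Yᶜ v x ∧ x ∈ 𝒯.Vt t)
        ⟨reach_refl hvY, hvt.1⟩ ?_).1
      rintro a b ha hb hab ⟨h1, h2⟩
      have hbt := hadj t ht.1 a b hab h2 ha
      exact ⟨reach_step h1 hab (fun h => hb (hlow t ht.1 b hbt h)), hbt⟩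
  · rintro (h | ⟨hvm, hvn⟩)
    · rw [hVX]; exact Or.inl ((hYdef v).2 (Or.inl (Or.inr h)))
    rw [hVX]
    by_cases hvY : v ∈ Y
    · exact Or.inl hvY
    right
    have hvmin : v ∉ 𝒯.bag tmin := fun h => hvY ((hYdef v).2 (Or.inr h))
    have hvp : v ∉ 𝒯.bag tp := fun h => hvY ((hYdef v).2 (Or.inl (Or.inr h)))
    have key : ∀ t, 𝒯.IsSChild S tmin t → ∀ c, G.ReachableIn Yᶜ v c → c ∉ 𝒯.Vt t := by
      intro t ht c hc hct
      exact hvn t ht ⟨hcomplow t ht.1 c v (reach_symm hc) hct, hvmin⟩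
    have hLeq : 𝒯.LS S tmax = 𝒯.LS S tmin := congrArg Prod.fst htr
    have hCS : G.compOutside Y v ∩ S = ∅ := by
      rw [Set.eq_empty_iff_forall_notMem]
      rintro s ⟨hsC, hsS⟩
      have hsY : s ∉ Y := reach_mem hsC
      have hsL : s ∈ 𝒯.LS S tmax :=
        ⟨⟨hcompmax v s hsC hvm, fun h => hsY ((hYdef s).2 (Or.inl (Or.inl h)))⟩, hsS⟩
      rw [hLeq] at hsL
      obtain ⟨⟨hs1, hs2⟩, -⟩ := hsL
      obtain ⟨t, ht, hst⟩ := 𝒯.Vt_child hs1 hs2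
      refine key t ⟨ht, s, ?_, ?_⟩ s hsC hst
      · by_cases h : s ∈ 𝒯.bag t
        · exact Or.inr ⟨h, hsS⟩
        · exact Or.inl ⟨⟨hst, h⟩, hsS⟩
      · rintro (h | h)
        · exact h.1 hs1
        · exact hs2 h.1
    rw [hXpath]
    refine ⟨hvY, hCS, ?_, ?_⟩
    · rw [Set.eq_empty_iff_forall_notMem]
      rintro x ⟨hx, hxc, hxm⟩
      rw [hXc] at hxc
      obtain ⟨t, ht, hxt⟩ := hxc
      have hxV := 𝒯.bag_sub_Vt t hxt
      rcases hx with hx | ⟨-, c, hcC, hcx⟩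
      · exact key t ht x hx hxV
      · exact key t ht c hcC (hadj t ht.1 x c hcx.symm hxV hxm)
    · by_contra hne
      rw [Set.not_nonempty_iff_eq_empty, Set.eq_empty_iff_forall_notMem] at hne
      refine hFp v hvp ?_ tmax ⟨hp, ?_⟩ hvm
      · rw [Set.eq_empty_iff_forall_notMem] at hCS ⊢
        rintro s ⟨hsC, hsS⟩
        refine hCS s ⟨?_, hsS⟩
        refine reach_transport hsC (fun x => G.ReachableIn Yᶜ v x) (reach_refl hvY) ?_
        intro a b ha hb hab h1
        by_contra hbC
        exact hne b ⟨⟨hbC, a, h1, hab⟩, hb⟩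
      · rw [← hLeq] at hL
        obtain ⟨s, hs⟩ := hL
        refine ⟨s, Or.inl hs, ?_⟩
        rintro (h | h)
        · exact h.1 (𝒯.Vt_mono hpm hs.1.1)
        · exact hs.1.2 (𝒯.sep hs.1.1 h.1 (𝒯.not_sub hp ⟨0, rfl⟩)).1
end

section
/- Let G=(V,E) be a connected graph, let S ⊆ V, and let 𝒯 be a slim S-nice tree decomposition of G of width k. Let (L^S, X^S, R^S) be an S-trace with L^S ≠ ∅ that occurs in 𝒯, with directed path from the top node t_max to the bottom node t_min; assume t_max has a parent t_p. Write X_max = X_{t_max}, X_p = X_{t_p}, X_min = X_{t_min}, and let X_c be the union of the bags of the S-children of t_min. Assume that every connected component C of G − X_min with V(C) ∩ S = ∅ satisfies V(C) ∩ V_t = ∅ for every S-child t of t_min, and that every connected component C of G − X_p with V(C) ∩ S = ∅ satisfies V(C) ∩ V_t = ∅ for every S-child t of t_p. Define V_L as the set of vertices v with v ∈ L^S ∪ (X_c ∖ X_min) or v connected in G − X_min to some vertex of L^S ∪ (X_c ∖ X_min); let X_path be the union of the vertex sets of the connected components C of G − (X_max ∪ X_p ∪ X_min) with V(C) ∩ S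 = ∅, N[V(C)] ∩ (X_c ∖ X_min) = ∅ and N(V(C)) ∖ X_p ≠ ∅; and set V_X = X_max ∪ X_p ∪ X_min ∪ X_path. Then V_{t_max} ∪ X_p = V_L ∪ V_X. -/
theorem aux_sep {V ι : Type} {G : SimpleGraph V} (𝒯 : RootedTreeDecomp V ι G) (t : ι) {u w : V}
    (hu : u ∈ 𝒯.Vt t) (h : u ∉ 𝒯.bag t ∨ u ∉ 𝒯.bag (𝒯.parent t)) (hadj : G.Adj u w) :
    w ∈ 𝒯.Vt t := by
  obtain ⟨t0, ⟨a, ha⟩, hut⟩ := hu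
  obtain ⟨m, hm, hall⟩ := 𝒯.bags_connected u
  obtain ⟨s, hus, hws⟩ := 𝒯.bags_of_edges hadj
  obtain ⟨n, hn, hc⟩ := hall t0 hut
  obtain ⟨b, hb, _⟩ := hall s hus
  have hna : n ≤ a := by
    by_contra hlt
    rcases h with h | h
    · apply h
      rw [← ha]
      exact hc a (by omega)
    · apply h
      rw [← ha, ← Function.iterate_succ_apply' 𝒯.parent a t0]
      exact hc (a + 1) (by omega)
  refine ⟨s, ⟨(a - n) + b, ?_⟩, hws⟩
  rw [Function.iterate_add_apply, hb, ← hn, ← Function.iterate_add_apply, Nat.sub_add_cancel hna, ha]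

theorem aux_walk {V ι : Type} {G : SimpleGraph V} (𝒯 : RootedTreeDecomp V ι G) (t : ι) {u w : V}
    (p : G.Walk u w) (hp : ∀ x ∈ p.support, x ∉ 𝒯.bag t) (hu : u ∈ 𝒯.Vt t) : w ∈ 𝒯.Vt t := by
  induction p with
  | nil => exact hu
  | cons hadj p ih =>
    apply ih
    · intro x hx
      exact hp x (by simp [hx])
    · exact aux_sep 𝒯 t hu (Or.inl (hp _ (by simp))) hadj

theorem aux_symm {V : Type} {G : SimpleGraph V} {W : Set V} {u v : V}
    (h : G.ReachableIn W u v) : G.ReachableIn W v u := by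
  obtain ⟨p, hp⟩ := h
  exact ⟨p.reverse, fun x hx => hp x (by simpa using hx)⟩

theorem aux_mono {V : Type} {G : SimpleGraph V} {W W' : Set V} {u v : V} (hs : W ⊆ W')
    (h : G.ReachableIn W u v) : G.ReachableIn W' u v := by
  obtain ⟨p, hp⟩ := h
  exact ⟨p, fun x hx => hs (hp x hx)⟩

theorem aux_ext {V : Type} {G : SimpleGraph V} {W : Set V} {u v w : V}
    (h : G.ReachableIn W u v) (ha : G.Adj v w) (hw : w ∈ W) : G.ReachableIn W u w := by
  obtain ⟨p, hp⟩ := h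
  refine ⟨p.concat ha, fun x hx => ?_⟩
  rw [SimpleGraph.Walk.support_concat] at hx
  simp only [List.concat_eq_append, List.mem_append, List.mem_singleton] at hx
  rcases hx with hx | rfl
  · exact hp x hx
  · exact hw

theorem aux_stay {V : Type} {G : SimpleGraph V} {P C : Set V}
    (hN : G.nbhdSet C ⊆ P) {u w : V} (p : G.Walk u w) (hp : ∀ x ∈ p.support, x ∈ Pᶜ)
    (hu : u ∈ C) : w ∈ C := by
  induction p with
  | nil => exact hu
  | @cons a b c hadj p ih =>
    apply ih
    · intro x hx
      exact hp x (by simp [hx])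
    · by_contra hc
      exact hp b (by simp) (hN ⟨hc, _, hu, hadj⟩)

/-- (Corollary `lem:legal0` of the paper.)  In the setting of
Statements 15 and 16, `V_{tmax} ∪ X_p = V_L ∪ V_X`. -/
theorem statement17 {V ι : Type} [Fintype V] [DecidableEq V] {G : SimpleGraph V}
    (hconn : G.Connected) (S : Set V) (k : ℕ)
    (𝒯 : RootedTreeDecomp V ι G)
    (hnice : 𝒯.IsSNice S) (hslim : 𝒯.IsSlim S k) (hw : 𝒯.HasWidth k)
    (tmin tmax tp : ι)
    (hL : (𝒯.LS S tmin).Nonempty)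
    (hbot : ∀ t', 𝒯.STrace S t' = 𝒯.STrace S tmin → 𝒯.InSubtree t' tmin)
    (htr : 𝒯.STrace S tmax = 𝒯.STrace S tmin)
    (htop : ∀ t', 𝒯.STrace S t' = 𝒯.STrace S tmin → 𝒯.InSubtree tmax t')
    (hp : 𝒯.IsParent tp tmax)
    (hFmin : ∀ v, v ∉ 𝒯.bag tmin → G.compOutside (𝒯.bag tmin) v ∩ S = ∅ →
      ∀ t, 𝒯.IsSChild S tmin t → v ∉ 𝒯.Vt t)
    (hFp : ∀ v, v ∉ 𝒯.bag tp → G.compOutside (𝒯.bag tp) v ∩ S = ∅ →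
      ∀ t, 𝒯.IsSChild S tp t → v ∉ 𝒯.Vt t)
    (Xc Y Xpath VX VL : Set V)
    (hXc : Xc = {u | ∃ t, 𝒯.IsSChild S tmin t ∧ u ∈ 𝒯.bag t})
    (hY : Y = 𝒯.bag tmax ∪ 𝒯.bag tp ∪ 𝒯.bag tmin)
    (hXpath : Xpath = {v | v ∉ Y ∧ G.compOutside Y v ∩ S = ∅ ∧
      (G.compOutside Y v ∪ G.nbhdSet (G.compOutside Y v)) ∩ (Xc \ 𝒯.bag tmin) = ∅ ∧
      (G.nbhdSet (G.compOutside Y v) \ 𝒯.bag tp).Nonempty})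
    (hVX : VX = Y ∪ Xpath)
    (hVL : VL = {v | v ∈ 𝒯.LS S tmin ∪ (Xc \ 𝒯.bag tmin) ∨
      ∃ u ∈ 𝒯.LS S tmin ∪ (Xc \ 𝒯.bag tmin), G.ReachableIn (𝒯.bag tmin)ᶜ v u}) :
    𝒯.Vt tmax ∪ 𝒯.bag tp = VL ∪ VX := by
  have hsub : 𝒯.InSubtree tmax tmin := htop tmin rfl
  have hVsub : 𝒯.Vt tmin ⊆ 𝒯.Vt tmax := by
    rintro x ⟨t', ⟨a, ha⟩, hx⟩
    obtain ⟨b, hb⟩ := hsub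
    exact ⟨t', ⟨b + a, by rw [Function.iterate_add_apply, ha, hb]⟩, hx⟩
  have hbag : ∀ t, 𝒯.bag t ⊆ 𝒯.Vt t := fun t x hx => ⟨t, ⟨0, rfl⟩, hx⟩
  have hXcsub : Xc ⊆ 𝒯.Vt tmin := by
    rw [hXc]
    rintro x ⟨t, ht, hx⟩
    exact ⟨t, ⟨1, ht.1.2⟩, hx⟩
  have hparent : 𝒯.parent tmax = tp := hp.2
  have hYmin : Yᶜ ⊆ (𝒯.bag tmin)ᶜ := by
    rw [hY]; intro x hx h; exact hx (Or.inr h)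
  have hYmax : Yᶜ ⊆ (𝒯.bag tmax)ᶜ := by
    rw [hY]; intro x hx h; exact hx (Or.inl (Or.inl h))
  simp only [RootedTreeDecomp.STrace, Prod.mk.injEq] at htr
  obtain ⟨htL, htX, -⟩ := htr
  have hSt : ∀ s ∈ S, s ∈ 𝒯.Vt tmax → s ∉ 𝒯.bag tmin → s ∈ 𝒯.LS S tmin := by
    intro s hs hsV hsn
    by_cases hb : s ∈ 𝒯.bag tmax
    · have : s ∈ 𝒯.XS S tmax := ⟨hb, hs⟩
      rw [htX] at this
      exact absurd this.1 hsn
    · have : s ∈ 𝒯.LS S tmax := ⟨⟨hsV, hb⟩, hs⟩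
      rwa [htL] at this
  have hSch : 𝒯.IsSChild S tp tmax := by
    refine ⟨hp, ?_⟩
    obtain ⟨x, hx⟩ := hL
    rw [← htL] at hx
    refine ⟨x, Or.inl hx, ?_⟩
    obtain ⟨⟨⟨t0, ⟨a, ha⟩, hxt⟩, hxb⟩, hxS⟩ := hx
    rintro (h | h)
    · exact h.1 ⟨t0, ⟨a + 1, by rw [Function.iterate_succ_apply', ha, hparent]⟩, hxt⟩
    · obtain ⟨m, hm, hall⟩ := 𝒯.bags_connected x
      obtain ⟨n, hn, hc⟩ := hall t0 hxt
      obtain ⟨b, hb, -⟩ := hall tp h.1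
      have hna : n < a := by
        by_contra hlt
        exact hxb (ha ▸ hc a (by omega))
      -- the node `tmax` is an ancestor of `tp`, which is its parent: a cycle
      have h1 : 𝒯.parent^[(a - n) + b + 1] tmax = tmax := by
        rw [Function.iterate_succ_apply, hparent, Function.iterate_add_apply, hb, ← hn,
          ← Function.iterate_add_apply, Nat.sub_add_cancel hna.le, ha]
      obtain ⟨r, hr⟩ := 𝒯.reaches_root tmax
      have h2 : ∀ j, 𝒯.parent^[j] 𝒯.root = 𝒯.root := fun j =>
        Function.iterate_fixed 𝒯.parent_root j
      have h3 : 𝒯.parent^[((a - n) + b + 1) * r] tmax = tmax := by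
        rw [Function.iterate_mul]
        exact Function.iterate_fixed h1 r
      have h4 : 𝒯.parent^[((a - n) + b + 1) * r] tmax = 𝒯.root := by
        have : ((a - n) + b + 1) * r = ((a - n) + b) * r + r := by ring
        rw [this, Function.iterate_add_apply, hr, h2]
      exact hp.1 (h3.symm.trans h4)
  apply Set.Subset.antisymm
  · rintro v (hv | hv)
    swap
    · right; rw [hVX, hY]; exact Or.inl (Or.inl (Or.inr hv))
    by_cases hvL : v ∈ VL
    · exact Or.inl hvL
    right
    rw [hVX]
    by_cases hvY : v ∈ Y
    · exact Or.inl hvY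
    right
    have hno : ∀ u ∈ 𝒯.LS S tmin ∪ (Xc \ 𝒯.bag tmin), ¬ G.ReachableIn (𝒯.bag tmin)ᶜ v u := by
      intro u hu hr
      apply hvL
      rw [hVL]
      exact Or.inr ⟨u, hu, hr⟩
    have hvp : v ∉ 𝒯.bag tp := by
      intro h; apply hvY; rw [hY]; exact Or.inl (Or.inr h)
    have hvC : v ∈ G.compOutside Y v := ⟨SimpleGraph.Walk.nil, by simpa using hvY⟩
    have hCS : G.compOutside Y v ∩ S = ∅ := by
      rw [Set.eq_empty_iff_forall_notMem]
      rintro s ⟨hs, hsS⟩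
      have hr := aux_mono hYmin hs
      have hsn : s ∉ 𝒯.bag tmin := by
        obtain ⟨p, hp⟩ := hr
        exact hp s p.end_mem_support
      refine hno s (Or.inl (hSt s hsS ?_ hsn)) hr
      obtain ⟨p, hp⟩ := hs
      exact aux_walk 𝒯 tmax p (fun x hx => hYmax (hp x hx)) hv
    rw [hXpath]
    refine ⟨hvY, hCS, ?_, ?_⟩
    · rw [Set.eq_empty_iff_forall_notMem]
      rintro x ⟨hx | hx, hxc⟩
      · exact hno x (Or.inr hxc) (aux_mono hYmin hx)
      · obtain ⟨-, w, hw, hadj⟩ := hx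
        exact hno x (Or.inr hxc) (aux_ext (aux_mono hYmin hw) hadj hxc.2)
    · by_contra hne
      rw [Set.not_nonempty_iff_eq_empty, Set.sdiff_eq_empty] at hne
      refine hFp v hvp ?_ tmax hSch hv
      rw [Set.eq_empty_iff_forall_notMem] at hCS ⊢
      rintro s ⟨⟨p, hp⟩, hsS⟩
      exact hCS s ⟨aux_stay hne p hp hvC, hsS⟩
  · rintro v (hv | hv)
    · left
      apply hVsub
      rw [hVL] at hv
      have hin : ∀ u ∈ 𝒯.LS S tmin ∪ (Xc \ 𝒯.bag tmin), u ∈ 𝒯.Vt tmin := by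
        rintro u (hu | hu)
        · exact hu.1.1
        · exact hXcsub hu.1
      rcases hv with hv | ⟨u, hu, hr⟩
      · exact hin v hv
      · obtain ⟨p, hp⟩ := aux_symm hr
        exact aux_walk 𝒯 tmin p hp (hin u hu)
    · rw [hVX] at hv
      rcases hv with hv | hv
      · rw [hY] at hv
        rcases hv with (hv | hv) | hv
        · exact Or.inl (hbag _ hv)
        · exact Or.inr hv
        · exact Or.inl (hVsub (hbag _ hv))
      · left
        rw [hXpath] at hv
        obtain ⟨hvY, -, -, x, ⟨hxC, w, hw, hadj⟩, hxp⟩ := hv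
        have hxY : x ∈ Y := by
          by_contra h
          exact hxC (aux_ext hw hadj h)
        have hxV : x ∈ 𝒯.Vt tmax := by
          rw [hY] at hxY
          rcases hxY with (h | h) | h
          · exact hbag _ h
          · exact absurd h hxp
          · exact hVsub (hbag _ h)
        have hwV : w ∈ 𝒯.Vt tmax := aux_sep 𝒯 tmax hxV (Or.inr (by rwa [hparent])) hadj.symm
        obtain ⟨p, hp⟩ := aux_symm hw
        exact aux_walk 𝒯 tmax p (fun y hy => hYmax (hp y hy)) hwV
end

section
/- Let G=(V,E) be a graph, let S ⊆ V, let 𝒯 be a slim S-nice tree decomposition of G of width k, and let T' be a full join tree of 𝒯 whose nodes all have the common bag X. Then every vertex v ∈ X ∖ S has neighbors in at least three pairwise distinct connected components of G − X, each of which contains a vertex of S. -/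
namespace RootedTreeDecomp

variable {V ι : Type} {G : SimpleGraph V}

theorem InSubtree.trans19 {𝒯 : RootedTreeDecomp V ι G} {a b c : ι}
    (h1 : 𝒯.InSubtree a b) (h2 : 𝒯.InSubtree b c) : 𝒯.InSubtree a c := by
  obtain ⟨n, hn⟩ := h1
  obtain ⟨m, hm⟩ := h2
  exact ⟨n + m, by rw [Function.iterate_add_apply, hm, hn]⟩

theorem iter_root19 (𝒯 : RootedTreeDecomp V ι G) (n : ℕ) :
    𝒯.parent^[n] 𝒯.root = 𝒯.root :=
  Function.iterate_fixed 𝒯.parent_root n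

theorem periodic_root19 (𝒯 : RootedTreeDecomp V ι G) {t : ι} {p : ℕ} (hp : 0 < p)
    (h : 𝒯.parent^[p] t = t) : t = 𝒯.root := by
  obtain ⟨n, hn⟩ := 𝒯.reaches_root t
  have h1 : 𝒯.parent^[p * n] t = t := by
    rw [Function.iterate_mul]; exact Function.iterate_fixed h n
  have h2 : n ≤ p * n := Nat.le_mul_of_pos_left n hp
  obtain ⟨d, hd⟩ := Nat.exists_eq_add_of_le' h2
  rw [hd, Function.iterate_add_apply, hn, iter_root19] at h1
  exact h1.symm

theorem cross19 (𝒯 : RootedTreeDecomp V ι G) {x : V} {c t₀ : ι}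
    (hx : x ∈ 𝒯.Vt c) (hx0 : x ∈ 𝒯.bag t₀) (h0 : ¬ 𝒯.InSubtree c t₀) :
    x ∈ 𝒯.bag c ∧ x ∈ 𝒯.bag (𝒯.parent c) := by
  obtain ⟨s, ⟨j, hj⟩, hxs⟩ := hx
  obtain ⟨m, -, hm⟩ := 𝒯.bags_connected x
  obtain ⟨n, hn, hall⟩ := hm s hxs
  obtain ⟨n0, hn0, -⟩ := hm t₀ hx0
  rcases Nat.lt_or_ge j n with hlt | hge
  · have h1 := hall j hlt.le
    have h2 := hall (j + 1) hlt
    rw [Function.iterate_succ_apply', hj] at h2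
    rw [hj] at h1
    exact ⟨h1, h2⟩
  · exfalso
    apply h0
    obtain ⟨d, rfl⟩ := Nat.exists_eq_add_of_le' hge
    rw [Function.iterate_add_apply, hn] at hj
    exact InSubtree.trans19 ⟨d, hj⟩ ⟨n0, hn0⟩

/-- `Vt c ∖ X` is closed under reachability outside `X`. -/
theorem closed19 (𝒯 : RootedTreeDecomp V ι G) {X : Set V} {c : ι}
    (hX : 𝒯.bag c = X ∨ 𝒯.bag (𝒯.parent c) = X) {u w : V}
    (hr : G.ReachableIn Xᶜ u w) : u ∈ 𝒯.Vt c ↔ w ∈ 𝒯.Vt c := by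
  have key : ∀ x y : V, G.Adj x y → x ∉ X → x ∈ 𝒯.Vt c → y ∈ 𝒯.Vt c := by
    intro x y hxy hxX hx
    obtain ⟨t₀, h1, h2⟩ := 𝒯.bags_of_edges hxy
    by_cases h0 : 𝒯.InSubtree c t₀
    · exact ⟨t₀, h0, h2⟩
    · have := 𝒯.cross19 hx h1 h0
      rcases hX with h | h
      · exact absurd (h ▸ this.1) hxX
      · exact absurd (h ▸ this.2) hxX
  obtain ⟨p, hp⟩ := hr
  induction p with
  | nil => rfl
  | @cons a b d hab q ih =>
    have ha : a ∉ X := hp a (by simp)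
    have hb : b ∉ X := hp b (by simp)
    have h2 : b ∈ 𝒯.Vt c ↔ d ∈ 𝒯.Vt c := ih (fun x hx => hp x (by simp [hx]))
    exact Iff.trans ⟨key a b hab ha, key b a hab.symm hb⟩ h2

theorem comparable19 (𝒯 : RootedTreeDecomp V ι G) {a b s : ι}
    (ha : 𝒯.InSubtree a s) (hb : 𝒯.InSubtree b s) :
    𝒯.InSubtree a b ∨ 𝒯.InSubtree b a := by
  obtain ⟨n, hn⟩ := ha
  obtain ⟨m, hm⟩ := hb
  rcases le_total n m with h | h
  · obtain ⟨d, rfl⟩ := Nat.exists_eq_add_of_le' h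
    rw [Function.iterate_add_apply, hn] at hm
    exact Or.inr ⟨d, hm⟩
  · obtain ⟨d, rfl⟩ := Nat.exists_eq_add_of_le' h
    rw [Function.iterate_add_apply, hm] at hn
    exact Or.inl ⟨d, hn⟩

/-- Two distinct children hanging off a connected set are incomparable. -/
theorem incomp19 (𝒯 : RootedTreeDecomp V ι G) {A : Set ι} (hA : 𝒯.ConnectedNodeSet A)
    {a b : ι} (hab : a ≠ b) (hbr : b ≠ 𝒯.root) (hb : b ∉ A)
    (hpa : 𝒯.parent a ∈ A) (hpb : 𝒯.parent b ∈ A) : ¬ 𝒯.InSubtree b a := by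
  rintro ⟨j, hj⟩
  obtain ⟨m, -, hm⟩ := hA
  obtain ⟨n, hn, hall⟩ := hm _ hpa
  obtain ⟨l, hl, -⟩ := hm _ hpb
  rcases j with _ | j
  · exact hab hj
  rw [Function.iterate_succ_apply] at hj
  rcases Nat.lt_or_ge n j with hlt | hge
  · obtain ⟨d, rfl⟩ := Nat.exists_eq_add_of_le' hlt.le
    rw [Function.iterate_add_apply, hn, ← hl, ← Function.iterate_succ_apply,
      ← Function.iterate_add_apply] at hj
    exact hbr (𝒯.periodic_root19 (by omega) hj)
  · exact hb (hj ▸ hall j hge)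

theorem sep19 (𝒯 : RootedTreeDecomp V ι G) {S : Set V} {A : Set ι} {X : Set V} {m : ι}
    (hA : 𝒯.ConnectedNodeSet A) (hbag : ∀ t ∈ A, 𝒯.bag t = X) (hm : 𝒯.IsTopOf A m)
    {u w : V} {a b : ι} (hab : a ≠ b) (hwX : w ∉ X)
    (hu : 𝒯.FullJoinBranch S A m u a) (hw : 𝒯.FullJoinBranch S A m w b) :
    ¬ G.ReachableIn Xᶜ u w := by
  intro hr
  have sub : ∀ {t : ι} {y : V}, 𝒯.parent t ∈ A → y ∈ 𝒯.Vt t → y ∈ 𝒯.Vt m := by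
    rintro t y ht ⟨s, hs, hy⟩
    exact ⟨s, InSubtree.trans19 (InSubtree.trans19 (hm.2 _ ht) ⟨1, rfl⟩) hs, hy⟩
  have hmX := 𝒯.closed19 (Or.inl (hbag m hm.1)) hr
  rcases hu with ⟨haA, ⟨pa, hpa, ⟨har, rfl⟩, -⟩, hua⟩ | ⟨-, rfl, hum⟩
  · rcases hw with ⟨hbA, ⟨pb, hpb, ⟨hbr, rfl⟩, -⟩, hwb⟩ | ⟨-, rfl, hwm⟩
    · have hwa := (𝒯.closed19 (Or.inr (hbag _ hpa)) hr).1 hua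
      obtain ⟨s, hs, hws⟩ := hwb
      by_cases h0 : 𝒯.InSubtree a s
      · rcases 𝒯.comparable19 h0 hs with h | h
        · exact 𝒯.incomp19 hA hab.symm har haA hpb hpa h
        · exact 𝒯.incomp19 hA hab hbr hbA hpa hpb h
      · have := (𝒯.cross19 hwa hws h0).2
        rw [hbag _ hpa] at this
        exact hwX this
    · exact hwm (hmX.1 (sub hpa hua))
  · rcases hw with ⟨hbA, ⟨pb, hpb, ⟨hbr, rfl⟩, -⟩, hwb⟩ | ⟨-, rfl, hwm⟩
    · exact hum (hmX.2 (sub hpb hwb))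
    · exact hab rfl

end RootedTreeDecomp

/-- In a slim `S`-nice tree decomposition of width `k`, if `T'`
is a full join tree whose nodes share the bag `X`, then every `v ∈ X ∖ S` has
neighbors in at least three pairwise distinct connected components of `G − X`,
each containing a vertex of `S`. -/
theorem statement19 {V ι : Type} [Fintype V] [DecidableEq V] {G : SimpleGraph V}
    (𝒯 : RootedTreeDecomp V ι G) (S : Set V) (k : ℕ)
    (hnice : 𝒯.IsSNice S) (hslim : 𝒯.IsSlim S k) (hw : 𝒯.HasWidth k)
    (A : Set ι) (X : Set V) (hfjt : 𝒯.IsFullJoinTree k A X) :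
    ∀ v ∈ X \ S, ∃ u₁ u₂ u₃ : V,
      G.Adj v u₁ ∧ G.Adj v u₂ ∧ G.Adj v u₃ ∧
      u₁ ∉ X ∧ u₂ ∉ X ∧ u₃ ∉ X ∧
      (∃ s ∈ S, G.ReachableIn Xᶜ u₁ s) ∧
      (∃ s ∈ S, G.ReachableIn Xᶜ u₂ s) ∧
      (∃ s ∈ S, G.ReachableIn Xᶜ u₃ s) ∧
      ¬G.ReachableIn Xᶜ u₁ u₂ ∧ ¬G.ReachableIn Xᶜ u₁ u₃ ∧
      ¬G.ReachableIn Xᶜ u₂ u₃ := by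
  intro v hv
  obtain ⟨-, hA, -, hbag, -⟩ := id hfjt
  obtain ⟨m, hmA, hm⟩ := id hA
  have htop : 𝒯.IsTopOf A m := ⟨hmA, fun t ht => (hm t ht).imp fun n h => h.1⟩
  obtain ⟨u₁, u₂, u₃, t₁, t₂, t₃, -, -, -, h12, h13, h23, ⟨a1, x1, s1, f1⟩, ⟨a2, x2, s2, f2⟩,
    ⟨a3, x3, s3, f3⟩⟩ := hslim.2.2.2.2.2.2 A X m hfjt htop v hv
  exact ⟨u₁, u₂, u₃, a1, a2, a3, x1, x2, x3, s1, s2, s3,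
    𝒯.sep19 hA hbag htop h12 x2 f1 f2, 𝒯.sep19 hA hbag htop h13 x3 f1 f3,
    𝒯.sep19 hA hbag htop h23 x3 f2 f3⟩
end
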